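/- Let q = p^f be a power of an odd prime p, let n ≥ 7, let Q be a nondegenerate quadratic form on V = F_q^n, and let GO(V,Q) be the group of similitudes of Q; suppose GO(V,Q) is not solvable. Let π be a set of primes with 2 ∈ π, 3 ∉ π and p ∉ π, and let H be a solvable Hall π-subgroup of GO(V,Q). Set G = H·(GO(V,Q) ∩ SL_n(F_q)). Then there exist x, y, z ∈ G such that H ∩ H^x ∩ H^y ∩ H^z is contained in the center of GO(V,Q), i.e. consists of scalar matrices. -/

import Mathlib

open Matrix Pointwise

/-- `H^x = x⁻¹ H x`. -/
def conjBy {G : Type*} [Group G] (H : Subgroup G) (x : G) : Subgroup G :=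
  Subgroup.map ((MulAut.conj x⁻¹).toMonoidHom) H

/-- Hall π-subgroup of the whole group. -/
def IsHallSubgroup {G : Type*} [Group G] (π : Set ℕ) (H : Subgroup G) : Prop :=
  (∀ r : ℕ, r.Prime → r ∣ Nat.card H → r ∈ π) ∧ ∀ r ∈ π, ¬ r ∣ H.index

/-- Hall π-subgroup of the subgroup `K`. -/
def IsHallSubgroupIn {G : Type*} [Group G] (π : Set ℕ) (K H : Subgroup G) : Prop :=
  H ≤ K ∧ (∀ r : ℕ, r.Prime → r ∣ Nat.card H → r ∈ π) ∧ ∀ r ∈ π, ¬ r ∣ H.relIndex K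

/-- The subgroup `SL_n` of `GL_n`. -/
def SLsub (n : ℕ) (F : Type*) [Field F] : Subgroup (GL (Fin n) F) where
  carrier := {g | Matrix.det (g : Matrix (Fin n) (Fin n) F) = 1}
  one_mem' := by simp
  mul_mem' := by
    intro a b ha hb
    simp only [Set.mem_setOf_eq, Units.val_mul, Matrix.det_mul] at *
    rw [ha, hb, one_mul]
  inv_mem' := by
    intro g hg
    simp only [Set.mem_setOf_eq] at *
    have h1 : ((g⁻¹ : GL (Fin n) F) : Matrix (Fin n) (Fin n) F) *
        (g : Matrix (Fin n) (Fin n) F) = 1 := g.inv_mul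
    have := congrArg Matrix.det h1
    rw [Matrix.det_mul, Matrix.det_one, hg, mul_one] at this
    exact this

/-- The group of similitudes of the bilinear form `B` (acting on row vectors). -/
def similitudeGroup {n : ℕ} {F : Type*} [Field F]
    (B : (Fin n → F) → (Fin n → F) → F) : Subgroup (GL (Fin n) F) where
  carrier := {g | ∃ c : Fˣ, ∀ u v : Fin n → F,
    B (Matrix.vecMul u (g : Matrix (Fin n) (Fin n) F))
      (Matrix.vecMul v (g : Matrix (Fin n) (Fin n) F)) = (c : F) * B u v}
  one_mem' := ⟨1, by simp⟩
  mul_mem' := by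
    rintro a b ⟨c, hc⟩ ⟨d, hd⟩
    refine ⟨c * d, fun u v => ?_⟩
    simp only [Units.val_mul, ← Matrix.vecMul_vecMul, hd, hc]
    ring
  inv_mem' := by
    rintro g ⟨c, hc⟩
    refine ⟨c⁻¹, fun u v => ?_⟩
    have h1 : ∀ w : Fin n → F, Matrix.vecMul
        (Matrix.vecMul w ((g⁻¹ : GL (Fin n) F) : Matrix (Fin n) (Fin n) F))
        (g : Matrix (Fin n) (Fin n) F) = w := by
      intro w
      rw [Matrix.vecMul_vecMul, g.inv_mul, Matrix.vecMul_one]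
    have h2 := hc (Matrix.vecMul u ((g⁻¹ : GL (Fin n) F) : Matrix (Fin n) (Fin n) F))
      (Matrix.vecMul v ((g⁻¹ : GL (Fin n) F) : Matrix (Fin n) (Fin n) F))
    rw [h1, h1] at h2
    rw [h2, Units.val_inv_eq_inv_val, inv_mul_cancel_left₀ (by exact_mod_cast c.ne_zero)]

/-- The isometry group of the bilinear form `B` (acting on row vectors). -/
def isometryGroup {n : ℕ} {F : Type*} [Field F]
    (B : (Fin n → F) → (Fin n → F) → F) : Subgroup (GL (Fin n) F) where
  carrier := {g | ∀ u v : Fin n → F,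
    B (Matrix.vecMul u (g : Matrix (Fin n) (Fin n) F))
      (Matrix.vecMul v (g : Matrix (Fin n) (Fin n) F)) = B u v}
  one_mem' := by simp
  mul_mem' := by
    intro a b ha hb u v
    simp only [Set.mem_setOf_eq] at ha hb
    simp only [Units.val_mul, ← Matrix.vecMul_vecMul]
    rw [hb, ha]
  inv_mem' := by
    intro g hg u v
    have h1 : ∀ w : Fin n → F, Matrix.vecMul
        (Matrix.vecMul w ((g⁻¹ : GL (Fin n) F) : Matrix (Fin n) (Fin n) F))
        (g : Matrix (Fin n) (Fin n) F) = w := by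
      intro w
      rw [Matrix.vecMul_vecMul, g.inv_mul, Matrix.vecMul_one]
    have h2 := hg (Matrix.vecMul u ((g⁻¹ : GL (Fin n) F) : Matrix (Fin n) (Fin n) F))
      (Matrix.vecMul v ((g⁻¹ : GL (Fin n) F) : Matrix (Fin n) (Fin n) F))
    rw [h1, h1] at h2
    exact h2.symm

/-- The group of similitudes of the quadratic form `Q` (acting on row vectors). -/
def qSimilitudeGroup {n : ℕ} {F : Type*} [Field F]
    (Q : (Fin n → F) → F) : Subgroup (GL (Fin n) F) where
  carrier := {g | ∃ c : Fˣ, ∀ v : Fin n → F,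
    Q (Matrix.vecMul v (g : Matrix (Fin n) (Fin n) F)) = (c : F) * Q v}
  one_mem' := ⟨1, by simp⟩
  mul_mem' := by
    rintro a b ⟨c, hc⟩ ⟨d, hd⟩
    refine ⟨c * d, fun v => ?_⟩
    simp only [Units.val_mul, ← Matrix.vecMul_vecMul, hd, hc]
    ring
  inv_mem' := by
    rintro g ⟨c, hc⟩
    refine ⟨c⁻¹, fun v => ?_⟩
    have h1 : ∀ w : Fin n → F, Matrix.vecMul
        (Matrix.vecMul w ((g⁻¹ : GL (Fin n) F) : Matrix (Fin n) (Fin n) F))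
        (g : Matrix (Fin n) (Fin n) F) = w := by
      intro w
      rw [Matrix.vecMul_vecMul, g.inv_mul, Matrix.vecMul_one]
    have h2 := hc (Matrix.vecMul v ((g⁻¹ : GL (Fin n) F) : Matrix (Fin n) (Fin n) F))
    rw [h1] at h2
    rw [h2, Units.val_inv_eq_inv_val, inv_mul_cancel_left₀ (by exact_mod_cast c.ne_zero)]

/-- The unitary group `GU_n` with respect to the field automorphism `φ`. -/
def GUgrp (n : ℕ) {K : Type*} [Field K] (φ : K →+* K) : Subgroup (GL (Fin n) K) where
  carrier := {g | ((g : Matrix (Fin n) (Fin n) K).map φ)ᵀ * (g : Matrix (Fin n) (Fin n) K) = 1}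
  one_mem' := by
    simp [Matrix.map_one φ φ.map_zero φ.map_one]
  mul_mem' := by
    intro a b ha hb
    simp only [Set.mem_setOf_eq, Units.val_mul, Matrix.map_mul, Matrix.transpose_mul] at *
    calc ((b : Matrix (Fin n) (Fin n) K).map φ)ᵀ * ((a : Matrix (Fin n) (Fin n) K).map φ)ᵀ *
          ((a : Matrix (Fin n) (Fin n) K) * (b : Matrix (Fin n) (Fin n) K))
        = ((b : Matrix (Fin n) (Fin n) K).map φ)ᵀ *
          (((a : Matrix (Fin n) (Fin n) K).map φ)ᵀ * (a : Matrix (Fin n) (Fin n) K)) *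
          (b : Matrix (Fin n) (Fin n) K) := by noncomm_ring
      _ = 1 := by rw [ha, mul_one, hb]
  inv_mem' := by
    intro g hg
    simp only [Set.mem_setOf_eq] at *
    have hcomm : (g : Matrix (Fin n) (Fin n) K) * ((g : Matrix (Fin n) (Fin n) K).map φ)ᵀ = 1 :=
      mul_eq_one_comm.mp hg
    have h1 : ((g : Matrix (Fin n) (Fin n) K) * ((g⁻¹ : GL (Fin n) K) : Matrix (Fin n) (Fin n) K)).map φ = 1 := by
      rw [g.mul_inv]
      exact Matrix.map_one φ φ.map_zero φ.map_one
    rw [Matrix.map_mul] at h1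
    have h2 := congrArg Matrix.transpose h1
    rw [Matrix.transpose_mul, Matrix.transpose_one] at h2
    calc (((g⁻¹ : GL (Fin n) K) : Matrix (Fin n) (Fin n) K).map φ)ᵀ *
          ((g⁻¹ : GL (Fin n) K) : Matrix (Fin n) (Fin n) K)
        = (((g⁻¹ : GL (Fin n) K) : Matrix (Fin n) (Fin n) K).map φ)ᵀ *
          (((g : Matrix (Fin n) (Fin n) K).map φ)ᵀ * (g : Matrix (Fin n) (Fin n) K)) *
          ((g⁻¹ : GL (Fin n) K) : Matrix (Fin n) (Fin n) K) := by rw [hg, mul_one]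
      _ = ((((g⁻¹ : GL (Fin n) K) : Matrix (Fin n) (Fin n) K).map φ)ᵀ *
          ((g : Matrix (Fin n) (Fin n) K).map φ)ᵀ) *
          ((g : Matrix (Fin n) (Fin n) K) * ((g⁻¹ : GL (Fin n) K) : Matrix (Fin n) (Fin n) K)) := by
            noncomm_ring
      _ = 1 := by rw [h2, g.mul_inv, mul_one]

/-!
Diagonalize `Q` so that all coefficients except the last one are `1`. By Sylow's theorem a conjugate
`K` of `H` contains the 2-group of signed permutation matrices that preserve every block
`{2k, 2k + 1}`, hence the reflections along the coordinate vectors and along the differences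
`e (2k) - e (2k + 1)`. If `K` contained the reflections along three linearly independent vectors,
each consecutive pair of them non-orthogonal, these would generate a solvable group acting
irreducibly on a three-dimensional space; the fixed line of an element of an abelian normal subgroup
would have an orbit consisting of three orthogonal lines, and 3 would divide `|K|`. Hence every
reflection in `K` is supported in one block, and `K` permutes the blocks. An element of `K` whose
conjugate under a rotation of the coordinates also lies in `K` preserves a second, interlaced
partition and is therefore monomial. Requiring the conjugates under two reflections along vectors
with almost no zero coordinates to permute the blocks then leaves only the scalar matrices.
-/

open Module LinearMap

section FiniteOrder

variable {F V : Type*} [Field F] [AddCommGroup V] [Module F V]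

lemma apply_eq_self_of_unipotent {m : V ≃ₗ[F] V} {N : ℕ} (hN : m ^ N = 1) (hNF : (N : F) ≠ 0)
    {y : V} (hy : m (m y - y) = m y - y) : m y = y := by
  have hpow : ∀ k : ℕ, (m ^ k) y = y + (k : F) • (m y - y) := by
    intro k
    induction k with
    | zero => simp
    | succ k ih =>
      rw [pow_succ', LinearEquiv.mul_apply, ih, map_add, map_smul, hy]
      push_cast
      module
  have h := hpow N
  rw [hN, LinearEquiv.coe_one, id_eq, left_eq_add, smul_eq_zero] at h
  exact sub_eq_zero.mp (h.resolve_left hNF)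

lemma isCompl_fixedSubmodule_range [FiniteDimensional F V] {m : V ≃ₗ[F] V} {N : ℕ}
    (hN : m ^ N = 1) (hNF : (N : F) ≠ 0) :
    IsCompl (m : V →ₗ[F] V).fixedSubmodule (range ((m : V →ₗ[F] V) - LinearMap.id)) := by
  rw [Submodule.isCompl_iff_disjoint]
  · rw [Submodule.disjoint_def]
    rintro _ hx ⟨y, rfl⟩
    exact sub_eq_zero.mpr (apply_eq_self_of_unipotent hN hNF hx)
  · rw [fixedSubmodule_eq_ker, add_comm, finrank_range_add_finrank_ker]

lemma eq_one_of_det_eq_one_of_finrank_range_le_one [FiniteDimensional F V] {m : V ≃ₗ[F] V}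
    {N : ℕ} (hN : m ^ N = 1) (hNF : (N : F) ≠ 0) (hdet : LinearEquiv.det m = 1)
    (hrank : finrank F (range ((m : V →ₗ[F] V) - LinearMap.id)) ≤ 1) : m = 1 := by
  obtain ⟨f, v, hm⟩ := LinearEquiv.mem_dilatransvections_iff_finrank.mpr hrank
  have hmx : ∀ x, m x = x + f x • v := fun x => by
    rw [← LinearMap.transvection.apply, ← hm, LinearEquiv.coe_coe]
  have hfv : f v = 0 := by
    have h := congrArg Units.val hdet
    rw [LinearEquiv.coe_det, hm, transvection.det, Units.val_one] at h
    simpa using h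
  refine LinearEquiv.ext fun x => apply_eq_self_of_unipotent hN hNF ?_
  simp [hmx, hfv]

end FiniteOrder

section Isometry

variable {F V : Type*} [Field F] [AddCommGroup V] [Module F V] {B : LinearMap.BilinForm F V}

-- Writing `A` and `G` for the matrices of `m` and `B`, `AᵀGA = G` gives `(A - 1)ᵀGA = -G(A - 1)`.
lemma fixedSubmodule_ne_bot_of_odd_finrank [FiniteDimensional F V] (hV : Odd (finrank F V))
    (h2 : (2 : F) ≠ 0) (hnd : B.Nondegenerate) {m : V ≃ₗ[F] V} (hm : B.IsOrthogonal m)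
    (hdet : LinearEquiv.det m = 1) : (m : V →ₗ[F] V).fixedSubmodule ≠ ⊥ := by
  let e := finBasis F V
  set A := toMatrix e e (m : V →ₗ[F] V)
  set G := LinearMap.BilinForm.toMatrix e B
  have hG : G.det ≠ 0 := (LinearMap.BilinForm.nondegenerate_iff_det_ne_zero e).mp hnd
  have hA : A.det = 1 := by
    rw [det_toMatrix, ← LinearEquiv.coe_det, hdet, Units.val_one]
  have hAG : Aᵀ * G * A = G := by
    rw [← LinearMap.BilinForm.toMatrix_comp]
    exact congrArg _ (LinearMap.BilinForm.ext fun x y => hm x y)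
  have hskew : (A - 1)ᵀ * G * A = -(G * (A - 1)) := by
    rw [transpose_sub, sub_mul, sub_mul, hAG, transpose_one, one_mul, mul_sub, mul_one, neg_sub]
  have hdet_skew := congrArg Matrix.det hskew
  rw [det_mul, det_mul, det_transpose, det_neg, det_mul, hA, Fintype.card_fin, hV.neg_one_pow]
    at hdet_skew
  have hdet_sub : (A - 1).det = 0 := by
    have : (2 * G.det) * (A - 1).det = 0 := by linear_combination hdet_skew
    exact (mul_eq_zero.mp this).resolve_left (mul_ne_zero h2 hG)
  rw [fixedSubmodule_eq_ker, Ne, ← LinearMap.isUnit_iff_ker_eq_bot, LinearMap.isUnit_iff_isUnit_det,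
    ← det_toMatrix e, map_sub, toMatrix_id, hdet_sub]
  exact not_isUnit_zero

lemma apply_range_sub_id_of_fixed {m : V ≃ₗ[F] V} (hm : B.IsOrthogonal m) {u y : V}
    (hu : m u = u) (hy : y ∈ range ((m : V →ₗ[F] V) - LinearMap.id)) : B u y = 0 := by
  obtain ⟨x, rfl⟩ := hy
  have := hm u x
  rw [hu] at this
  simp [this]

lemma finrank_fixedSubmodule_of_finrank_eq_three [FiniteDimensional F V] (hV : finrank F V = 3)
    (h2 : (2 : F) ≠ 0) (hnd : B.Nondegenerate) {m : V ≃ₗ[F] V} (hm : B.IsOrthogonal m)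
    (hdet : LinearEquiv.det m = 1) {N : ℕ} (hN : m ^ N = 1) (hNF : (N : F) ≠ 0) (hm1 : m ≠ 1) :
    finrank F (m : V →ₗ[F] V).fixedSubmodule = 1 := by
  have hpos := Submodule.one_le_finrank_iff.mpr
    (fixedSubmodule_ne_bot_of_odd_finrank (hV ▸ by decide) h2 hnd hm hdet)
  have hrange := mt (eq_one_of_det_eq_one_of_finrank_range_le_one hN hNF hdet) hm1
  have hsum := finrank_range_add_finrank_ker ((m : V →ₗ[F] V) - LinearMap.id)
  rw [← fixedSubmodule_eq_ker, hV] at hsum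
  omega

lemma apply_self_ne_zero_of_finrank_fixedSubmodule [FiniteDimensional F V]
    (hnd : B.Nondegenerate) {m : V ≃ₗ[F] V} (hm : B.IsOrthogonal m) {N : ℕ} (hN : m ^ N = 1)
    (hNF : (N : F) ≠ 0) (hrank : finrank F (m : V →ₗ[F] V).fixedSubmodule = 1) {u : V}
    (hu : m u = u) (hu0 : u ≠ 0) : B u u ≠ 0 := by
  intro huu
  refine hu0 (hnd.1 u fun x => ?_)
  obtain ⟨y, hy, z, hz, rfl⟩ := Submodule.mem_sup.mp
    ((isCompl_fixedSubmodule_range hN hNF).sup_eq_top ▸ Submodule.mem_top (x := x))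
  obtain ⟨k, hk⟩ := (finrank_eq_one_iff_of_nonzero' (⟨u, hu⟩ : (m : V →ₗ[F] V).fixedSubmodule)
    (by simpa [Subtype.ext_iff] using hu0)).mp hrank ⟨y, hy⟩
  have hy' : k • u = y := congrArg Subtype.val hk
  rw [map_add, apply_range_sub_id_of_fixed hm hu hz, ← hy', map_smul, huu, smul_zero, add_zero]

lemma smul_span_singleton_eq (g : V ≃ₗ[F] V) (u : V) : g • (F ∙ u) = F ∙ g u := by
  rw [Submodule.smul_span, Set.smul_set_singleton, LinearEquiv.smul_def]

lemma span_singleton_eq_or_orthogonal {W : Subgroup (V ≃ₗ[F] V)}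
    (hW : ∀ w ∈ W, B.IsOrthogonal w) {u : V} (hu0 : u ≠ 0)
    (horb : ∀ w ∈ W, w u ∈ F ∙ u ∨ B u (w u) = 0) {w w' : V ≃ₗ[F] V} (hw : w ∈ W)
    (hw' : w' ∈ W) : (F ∙ w u) = F ∙ w' u ∨ B (w u) (w' u) = 0 := by
  have hmul : w ((w⁻¹ * w') u) = w' u := by simp [← LinearEquiv.mul_apply]
  refine (horb _ (mul_mem (inv_mem hw) hw')).imp (fun h => ?_) fun h => by
    rwa [← hW w hw, hmul] at h
  obtain ⟨k, hk⟩ := Submodule.mem_span_singleton.mp h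
  have hkw : k • w u = w' u := by rw [← hmul, ← hk, map_smul]
  have hk0 : k ≠ 0 := by
    rintro rfl
    rw [zero_smul, eq_comm, LinearEquiv.map_eq_zero_iff] at hkw
    exact hu0 hkw
  rw [← hkw, Submodule.span_singleton_smul_eq hk0.isUnit]

-- The orbit of the line `F ∙ u` is an orthogonal decomposition of `V` into anisotropic lines.
theorem finrank_dvd_card_of_orthogonal_orbit {W : Subgroup (V ≃ₗ[F] V)}
    (hW : ∀ w ∈ W, B.IsOrthogonal w)
    (hirr : ∀ U : Submodule F V, (∀ w ∈ W, ∀ x ∈ U, w x ∈ U) → U = ⊥ ∨ U = ⊤) {u : V}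
    (huu : B u u ≠ 0) (horb : ∀ w ∈ W, w u ∈ F ∙ u ∨ B u (w u) = 0) :
    finrank F V ∣ Nat.card W := by
  have hu0 : u ≠ 0 := fun h => huu (by rw [h, map_zero])
  let S := MulAction.stabilizer W (F ∙ u)
  have mk_eq_iff : ∀ w w' : W, (w : W ⧸ S) = w' ↔
      (F ∙ (w : V ≃ₗ[F] V) u) = F ∙ (w' : V ≃ₗ[F] V) u := fun w w' => by
    rw [QuotientGroup.eq, MulAction.mem_stabilizer_iff, mul_smul, inv_smul_eq_iff,
      Subgroup.smul_def, Subgroup.smul_def, smul_span_singleton_eq, smul_span_singleton_eq, eq_comm]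
  let v : W ⧸ S → V := fun c => (c.out : V ≃ₗ[F] V) u
  have hli : LinearIndependent F v := by
    refine linearIndependent_of_isOrthoᵢ (B := B) (fun c d hcd => ?_) fun c => by
      rwa [hW _ c.out.2]
    refine (span_singleton_eq_or_orthogonal hW hu0 horb c.out.2 d.out.2).resolve_left
      fun h => hcd ?_
    rw [← c.out_eq', ← d.out_eq', mk_eq_iff]
    exact h
  have hmem : ∀ w : W, (w : V ≃ₗ[F] V) u ∈ Submodule.span F (Set.range v) := fun w => by
    have hline : (w : V ≃ₗ[F] V) u ∈ F ∙ v (w : W ⧸ S) := by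
      rw [(mk_eq_iff _ w).mp (w : W ⧸ S).out_eq']
      exact Submodule.mem_span_singleton_self _
    exact Submodule.span_mono (Set.singleton_subset_iff.mpr (Set.mem_range_self _)) hline
  have hspan : ⊤ ≤ Submodule.span F (Set.range v) := by
    refine ((hirr _ fun w hw x hx => ?_).resolve_left fun h => hu0 ?_).ge
    · suffices h : Submodule.span F (Set.range v) ≤
          (Submodule.span F (Set.range v)).comap (w : V →ₗ[F] V) from h hx
      rw [Submodule.span_le]
      rintro _ ⟨c, rfl⟩
      exact hmem (⟨w, hw⟩ * c.out)
    · simpa [h] using hmem 1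
  rw [finrank_eq_nat_card_basis (Basis.mk hli hspan)]
  exact S.index_dvd_card

end Isometry

section AbelianNormal

open scoped commutatorElement

lemma exists_abelian_normal_le_commutator {W : Type*} [Group W] [Group.IsSolvable W]
    (hna : commutator W ≠ ⊥) :
    ∃ M : Subgroup W, M.Normal ∧ M ≤ commutator W ∧ M ≠ ⊥ ∧ ∀ x ∈ M, ∀ y ∈ M, x * y = y * x := by
  classical
  have hex : ∃ k, derivedSeries W (k + 1) = ⊥ :=
    Group.IsSolvable.solvable.imp fun k hk => eq_bot_mono (derivedSeries_antitone W k.le_succ) hk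
  have hpos : Nat.find hex ≠ 0 := fun h => hna (derivedSeries_one W ▸ (Nat.find_eq_zero hex).mp h)
  obtain ⟨j, hj⟩ := Nat.exists_eq_succ_of_ne_zero hpos
  refine ⟨derivedSeries W (j + 1), inferInstance, ?_, Nat.find_min hex (by omega), ?_⟩
  · rw [← derivedSeries_one]
    exact derivedSeries_antitone W (by omega)
  · intro x hx y hy
    rw [← commutatorElement_eq_one_iff_mul_comm, ← Subgroup.mem_bot, ← Nat.find_spec hex, hj]
    exact Subgroup.commutator_mem_commutator hx hy

end AbelianNormal

section Reflection

variable {F V : Type*} [Field F] [AddCommGroup V] [Module F V] {B : LinearMap.BilinForm F V}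

/-- The reflection `x ↦ x - 2 B(a, x) / B(a, a) a` along `a`; it is the identity when
`B a a = 0`. -/
def orthoReflection (B : LinearMap.BilinForm F V) (a : V) : Module.End F V :=
  Module.preReflection a ((2 / B a a) • B a)

lemma orthoReflection_apply (B : LinearMap.BilinForm F V) (a x : V) :
    orthoReflection B a x = x - (2 * B a x / B a a) • a := by
  rw [orthoReflection, Module.preReflection_apply, LinearMap.smul_apply, smul_eq_mul,
    div_mul_eq_mul_div]

lemma orthoReflection_self {a : V} (ha : B a a ≠ 0) : orthoReflection B a a = -a := by
  rw [orthoReflection_apply, mul_div_cancel_right₀ _ ha]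
  module

lemma isOrthogonal_orthoReflection (hs : B.IsSymm) {a : V} (ha : B a a ≠ 0) :
    B.IsOrthogonal (orthoReflection B a) := fun x y => by
  simp only [orthoReflection_apply, map_sub, map_smul, LinearMap.sub_apply, LinearMap.smul_apply,
    smul_eq_mul, hs.eq x a]
  field_simp
  ring

lemma isOrthogonal_of_mem_closure {S : Set (V ≃ₗ[F] V)} (hS : ∀ r ∈ S, B.IsOrthogonal r)
    {w : V ≃ₗ[F] V} (hw : w ∈ Subgroup.closure S) : B.IsOrthogonal w := by
  induction hw using Subgroup.closure_induction with
  | mem r hr => exact hS r hr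
  | one => exact fun _ _ => rfl
  | mul v w _ _ hv hw =>
    exact fun x y => by rw [LinearEquiv.mul_apply, LinearEquiv.mul_apply, hv, hw]
  | inv w _ hw => exact fun x y => by rw [← hw]; simp

lemma mem_or_orthogonal_of_orthoReflection_mem (h2 : (2 : F) ≠ 0) {a : V} (ha : B a a ≠ 0)
    {U : Submodule F V} (hU : ∀ x ∈ U, orthoReflection B a x ∈ U) : a ∈ U ∨ ∀ x ∈ U, B a x = 0 := by
  by_contra! h
  obtain ⟨haU, x, hx, hax⟩ := h
  have hmem := U.sub_mem hx (hU x hx)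
  rw [orthoReflection_apply, sub_sub_cancel] at hmem
  exact haU ((U.smul_mem_iff (div_ne_zero (mul_ne_zero h2 hax) ha)).mp hmem)

lemma eq_zero_of_forall_fixed {W : Subgroup (V ≃ₗ[F] V)} [Finite W] (hcard : (Nat.card W : F) ≠ 0)
    (h2 : (2 : F) ≠ 0) (hspan : Submodule.span F {x | ∃ w ∈ W, w x = -x} = ⊤) {y : V}
    (hy : ∀ w ∈ W, w y = y) : y = 0 := by
  have := Fintype.ofFinite W
  let E : V →ₗ[F] V := ∑ w : W, ((w : V ≃ₗ[F] V) : V →ₗ[F] V)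
  have hE : ∀ x, E x = ∑ w : W, (w : V ≃ₗ[F] V) x := fun x => by simp [E, LinearMap.sum_apply]
  have hEW : ∀ w ∈ W, ∀ x, E (w x) = E x := fun w hw x => by
    rw [hE, hE]
    exact Fintype.sum_equiv (Equiv.mulRight (⟨w, hw⟩ : W)) _ _ fun _ => rfl
  have hker : LinearMap.ker E = ⊤ := by
    rw [eq_top_iff, ← hspan, Submodule.span_le]
    rintro x ⟨w, hw, hx⟩
    have h := hEW w hw x
    rw [hx, map_neg, neg_eq_iff_add_eq_zero, ← two_smul F] at h
    exact (smul_eq_zero.mp h).resolve_left h2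
  have hEy : E y = (Nat.card W : F) • y := by
    rw [hE, Finset.sum_congr rfl fun (w : W) _ => hy w w.2, Finset.sum_const, Finset.card_univ,
      ← Nat.card_eq_fintype_card, Nat.cast_smul_eq_nsmul]
  rw [LinearMap.ker_eq_top.mp hker, LinearMap.zero_apply] at hEy
  exact (smul_eq_zero.mp hEy.symm).resolve_left hcard

end Reflection

section ReflectionGroup

variable {F V ι : Type*} [Field F] [AddCommGroup V] [Module F V] {B : LinearMap.BilinForm F V}
  {v : ι → V} {r : ι → V ≃ₗ[F] V}

lemma nondegenerate_of_closure_reflections (hs : B.IsSymm) (h2 : (2 : F) ≠ 0)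
    (hspan : Submodule.span F (Set.range v) = ⊤) (hv : ∀ i, B (v i) (v i) ≠ 0)
    (hr : ∀ i, (r i : V →ₗ[F] V) = orthoReflection B (v i))
    [Finite (Subgroup.closure (Set.range r))]
    (hcard : (Nat.card (Subgroup.closure (Set.range r)) : F) ≠ 0) : B.Nondegenerate := by
  have hrx : ∀ i x, r i x = orthoReflection B (v i) x := fun i x => by rw [← hr]; rfl
  refine hs.isRefl.nondegenerate_iff_separatingLeft.mpr fun y hy => ?_
  refine eq_zero_of_forall_fixed hcard h2 ?_ fun w hw => ?_
  · rw [eq_top_iff, ← hspan]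
    refine Submodule.span_mono ?_
    rintro _ ⟨i, rfl⟩
    exact ⟨r i, Subgroup.subset_closure ⟨i, rfl⟩, by rw [hrx, orthoReflection_self (hv i)]⟩
  · suffices h : Subgroup.closure (Set.range r) ≤ MulAction.stabilizer (V ≃ₗ[F] V) y from h hw
    rw [Subgroup.closure_le]
    rintro _ ⟨i, rfl⟩
    change r i y = y
    rw [hrx, orthoReflection_apply, hs.eq, hy, mul_zero, zero_div, zero_smul, sub_zero]

lemma eq_bot_or_top_of_reflections (h2 : (2 : F) ≠ 0) (hnd : B.Nondegenerate)
    (hspan : Submodule.span F (Set.range v) = ⊤) (hv : ∀ i, B (v i) (v i) ≠ 0)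
    (hconn : ∀ i j, Relation.ReflTransGen (fun i j => B (v j) (v i) ≠ 0) i j) {U : Submodule F V}
    (hU : ∀ i, ∀ x ∈ U, orthoReflection B (v i) x ∈ U) : U = ⊥ ∨ U = ⊤ := by
  have hdich := fun i => mem_or_orthogonal_of_orthoReflection_mem h2 (hv i) (hU i)
  by_cases h : ∃ i, v i ∈ U
  · obtain ⟨i, hi⟩ := h
    right
    rw [eq_top_iff, ← hspan, Submodule.span_le]
    rintro _ ⟨j, rfl⟩
    induction hconn i j with
    | refl => exact hi
    | tail _ hjk hj => exact (hdich _).resolve_right fun h => hjk (h _ hj)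
  · left
    push Not at h
    refine (Submodule.eq_bot_iff U).mpr fun x hx => hnd.2 x fun y => ?_
    suffices hle : ⊤ ≤ LinearMap.ker (B.flip x) from hle (Submodule.mem_top (x := y))
    rw [← hspan, Submodule.span_le]
    rintro _ ⟨i, rfl⟩
    exact (hdich i).resolve_left (h i) x hx

lemma commutator_closure_reflections_ne_bot (h2 : (2 : F) ≠ 0) (hnd : B.Nondegenerate)
    (hspan : Submodule.span F (Set.range v) = ⊤) (hv : ∀ i, B (v i) (v i) ≠ 0)
    (hconn : ∀ i j, Relation.ReflTransGen (fun i j => B (v j) (v i) ≠ 0) i j)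
    (hr : ∀ i, (r i : V →ₗ[F] V) = orthoReflection B (v i)) (i : ι) (hV : 1 < finrank F V) :
    commutator (Subgroup.closure (Set.range r)) ≠ ⊥ := by
  have hrx : ∀ i x, r i x = orthoReflection B (v i) x := fun i x => by rw [← hr]; rfl
  intro h
  have hcomm : ∀ j x, r i (r j x) = r j (r i x) := fun j x => by
    have hmem := fun k => Subgroup.subset_closure (Set.mem_range_self (f := r) k)
    have := (commutator_eq_bot_iff _).mp h
    exact DFunLike.congr_fun (congrArg Subtype.val (mul_comm'
      (⟨r i, hmem i⟩ : Subgroup.closure (Set.range r)) ⟨r j, hmem j⟩)) x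
  have hmem : ∀ j, r j (v i) ∈ F ∙ v i := fun j => by
    have hneg : r i (r j (v i)) = -r j (v i) := by
      rw [hcomm, hrx i, orthoReflection_self (hv i), map_neg]
    rw [hrx i, orthoReflection_apply, sub_eq_iff_eq_add, eq_neg_add_iff_add_eq, ← two_smul F]
      at hneg
    rw [← (F ∙ v i).smul_mem_iff h2, hneg]
    exact Submodule.smul_mem _ _ (Submodule.mem_span_singleton_self _)
  have hvi : v i ≠ 0 := fun h => hv i (by rw [h, map_zero])
  rcases eq_bot_or_top_of_reflections (U := F ∙ v i) h2 hnd hspan hv hconn fun j x hx => by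
    obtain ⟨k, rfl⟩ := Submodule.mem_span_singleton.mp hx
    rw [map_smul, ← hrx]
    exact Submodule.smul_mem _ _ (hmem j) with hbot | htop
  · exact hvi (Submodule.span_singleton_eq_bot.mp hbot)
  · rw [← finrank_top F V, ← htop, finrank_span_singleton hvi] at hV
    exact lt_irrefl 1 hV

lemma mem_span_or_orthogonal_of_commute (h2 : (2 : F) ≠ 0) {m m' : V ≃ₗ[F] V}
    (hm' : B.IsOrthogonal m') (hcomm : m * m' = m' * m)
    (hrank : finrank F (m : V →ₗ[F] V).fixedSubmodule = 1)
    (hrank' : finrank F (m' : V →ₗ[F] V).fixedSubmodule = 1) {u x : V} (hu : m u = u)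
    (huu : B u u ≠ 0) (hx : m' x = x) : x ∈ F ∙ u ∨ B u x = 0 := by
  have hu0 : u ≠ 0 := fun h => huu (by rw [h, map_zero])
  have hline : ∀ {g : V ≃ₗ[F] V} {y : V}, finrank F (g : V →ₗ[F] V).fixedSubmodule = 1 →
      g u = u → g y = y → ∃ k : F, k • u = y := fun {g y} hg hgu hgy => by
    obtain ⟨k, hk⟩ := (finrank_eq_one_iff_of_nonzero' (⟨u, hgu⟩ : (g : V →ₗ[F] V).fixedSubmodule)
      (by simpa [Subtype.ext_iff] using hu0)).mp hg ⟨y, hgy⟩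
    exact ⟨k, congrArg Subtype.val hk⟩
  obtain ⟨k, hk⟩ := hline hrank hu (show m (m' u) = m' u by
    rw [← LinearEquiv.mul_apply, hcomm, LinearEquiv.mul_apply, hu])
  have hk2 : k * k = 1 := by
    have h := hm' u u
    rw [← hk, map_smul, map_smul, LinearMap.smul_apply, smul_eq_mul, smul_eq_mul, ← mul_assoc] at h
    exact mul_right_cancel₀ huu (h.trans (one_mul _).symm)
  rcases mul_self_eq_one_iff.mp hk2 with rfl | rfl
  · rw [one_smul] at hk
    exact Or.inl (Submodule.mem_span_singleton.mpr (hline hrank' hk.symm hx))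
  · right
    have h := hm' u x
    rw [hx, ← hk, neg_one_smul, map_neg, LinearMap.neg_apply, neg_eq_iff_add_eq_zero,
      ← two_mul] at h
    exact (mul_eq_zero.mp h).resolve_left h2

/- Conjugates of an element of an abelian normal subgroup commute with it, so their fixed lines
coincide or are orthogonal. -/
lemma exists_orthogonal_orbit_of_finrank_eq_three (h2 : (2 : F) ≠ 0) (hV : finrank F V = 3)
    (hnd : B.Nondegenerate) {W : Subgroup (V ≃ₗ[F] V)} [Group.IsSolvable W]
    (hcard : (Nat.card W : F) ≠ 0) (hW : ∀ w ∈ W, B.IsOrthogonal w) (hna : commutator W ≠ ⊥) :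
    ∃ u, B u u ≠ 0 ∧ ∀ w ∈ W, w u ∈ F ∙ u ∨ B u (w u) = 0 := by
  have : FiniteDimensional F V := FiniteDimensional.of_finrank_pos (by omega)
  obtain ⟨M, hMnormal, hMle, hMne, hMcomm⟩ := exists_abelian_normal_le_commutator hna
  have hdet : ∀ m ∈ M, LinearEquiv.det (m : V ≃ₗ[F] V) = 1 := fun m hm =>
    Abelianization.commutator_subset_ker (LinearEquiv.det.comp W.subtype) (hMle hm)
  have hpow : ∀ w : W, (w : V ≃ₗ[F] V) ^ Nat.card W = 1 := fun w => by
    rw [← Subgroup.coe_pow, pow_card_eq_one', Subgroup.coe_one]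
  have hrank : ∀ m ∈ M, m ≠ 1 →
      finrank F ((m : V ≃ₗ[F] V) : V →ₗ[F] V).fixedSubmodule = 1 := fun m hm hm1 =>
    finrank_fixedSubmodule_of_finrank_eq_three hV h2 hnd (hW m m.2) (hdet m hm) (hpow m) hcard
      (by simpa using hm1)
  obtain ⟨⟨m, hm⟩, hm1⟩ := M.ne_bot_iff_exists_ne_one.mp hMne
  replace hm1 : m ≠ 1 := by simpa using hm1
  have hpos := one_pos.trans_eq (hrank m hm hm1).symm
  obtain ⟨⟨u, hu⟩, hu0⟩ := (finrank_pos_iff_exists_ne_zero (R := F)).mp hpos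
  have huu := apply_self_ne_zero_of_finrank_fixedSubmodule hnd (hW m m.2) (hpow m) hcard
    (hrank m hm hm1) hu (by simpa using hu0)
  refine ⟨u, huu, fun w hw => ?_⟩
  let m' : W := ⟨w, hw⟩ * m * ⟨w, hw⟩⁻¹
  have hm' : m' ∈ M := hMnormal.conj_mem m hm ⟨w, hw⟩
  refine mem_span_or_orthogonal_of_commute h2 (hW m' m'.2)
    (congrArg Subtype.val (hMcomm m hm m' hm')) (hrank m hm hm1)
    (hrank m' hm' (by simpa [m'] using hm1)) hu huu ?_
  have hwu : w⁻¹ (w u) = u := by simp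
  change w (m.1 (w⁻¹ (w u))) = w u
  rw [hwu]
  exact congrArg w hu

theorem three_dvd_card_closure_reflections (hs : B.IsSymm) (h2 : (2 : F) ≠ 0)
    (hV : finrank F V = 3) (hspan : Submodule.span F (Set.range v) = ⊤)
    (hv : ∀ i, B (v i) (v i) ≠ 0)
    (hconn : ∀ i j, Relation.ReflTransGen (fun i j => B (v j) (v i) ≠ 0) i j)
    (hr : ∀ i, (r i : V →ₗ[F] V) = orthoReflection B (v i)) (i : ι)
    [Finite (Subgroup.closure (Set.range r))] [Group.IsSolvable (Subgroup.closure (Set.range r))]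
    (hcard : (Nat.card (Subgroup.closure (Set.range r)) : F) ≠ 0) :
    3 ∣ Nat.card (Subgroup.closure (Set.range r)) := by
  have hrx : ∀ i x, r i x = orthoReflection B (v i) x := fun i x => by rw [← hr]; rfl
  have hnd := nondegenerate_of_closure_reflections hs h2 hspan hv hr hcard
  have hna := commutator_closure_reflections_ne_bot h2 hnd hspan hv hconn hr i (by omega)
  have hW : ∀ w ∈ Subgroup.closure (Set.range r), B.IsOrthogonal w := fun w hw => by
    refine isOrthogonal_of_mem_closure ?_ hw
    rintro _ ⟨j, rfl⟩ x y
    rw [hrx, hrx, isOrthogonal_orthoReflection hs (hv j)]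
  obtain ⟨u, huu, horb⟩ := exists_orthogonal_orbit_of_finrank_eq_three h2 hV hnd hcard hW hna
  rw [← hV]
  refine finrank_dvd_card_of_orthogonal_orbit hW (fun U hU => ?_) huu horb
  refine eq_bot_or_top_of_reflections h2 hnd hspan hv hconn fun j x hx => ?_
  rw [← hrx]
  exact hU _ (Subgroup.subset_closure ⟨j, rfl⟩) x hx

end ReflectionGroup

section Restriction

variable {F V : Type*} [Field F] [AddCommGroup V] [Module F V]

/-- The action on the submodule `X` of those elements of a linear group `Γ` that stabilize it. -/
def restrictHom (Γ : Subgroup (V ≃ₗ[F] V)) (X : Submodule F V) :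
    MulAction.stabilizer Γ X →* (X ≃ₗ[F] X) where
  toFun g := LinearEquiv.ofSubmodules (g.1 : V ≃ₗ[F] V) X X g.2
  map_one' := rfl
  map_mul' _ _ := rfl

lemma mem_stabilizer_of_forall_mem {Γ : Subgroup (V ≃ₗ[F] V)} {X : Submodule F V}
    [FiniteDimensional F X] {g : Γ} (hg : ∀ x ∈ X, (g : V ≃ₗ[F] V) x ∈ X) :
    g ∈ MulAction.stabilizer Γ X :=
  Submodule.eq_of_le_of_finrank_eq (Submodule.map_le_iff_le_comap.mpr hg)
    (g.1.finrank_map_eq X)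

lemma reflTransGen_fin_three {R : Fin 3 → Fin 3 → Prop} (hR : ∀ i j, R i j → R j i) (h01 : R 0 1)
    (h12 : R 1 2) (i j : Fin 3) : Relation.ReflTransGen R i j := by
  have hi : Relation.ReflTransGen R i 1 := by
    fin_cases i
    exacts [.single h01, .refl, .single (hR _ _ h12)]
  have hj : Relation.ReflTransGen R 1 j := by
    fin_cases j
    exacts [.single (hR _ _ h01), .refl, .single h12]
  exact hi.trans hj

lemma orthoReflection_restrict_mem_range {B : LinearMap.BilinForm F V} {Γ : Subgroup (V ≃ₗ[F] V)}
    {X : Submodule F V} [FiniteDimensional F X] (a : X)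
    (ha : ∃ g ∈ Γ, ∀ x, g x = orthoReflection B (a : V) x) :
    ∃ s ∈ (restrictHom Γ X).range, (s : X →ₗ[F] X) = orthoReflection (B.restrict X) a := by
  obtain ⟨g, hgΓ, hg⟩ := ha
  have hgX : (⟨g, hgΓ⟩ : Γ) ∈ MulAction.stabilizer Γ X :=
    mem_stabilizer_of_forall_mem fun x hx => by
      rw [hg, orthoReflection_apply]
      exact X.sub_mem hx (X.smul_mem _ a.2)
  exact ⟨_, ⟨⟨_, hgX⟩, rfl⟩, LinearMap.ext fun x => Subtype.ext (hg x)⟩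

theorem three_dvd_card_of_orthoReflection_mem {B : LinearMap.BilinForm F V} (hs : B.IsSymm)
    (h2 : (2 : F) ≠ 0) {Γ : Subgroup (V ≃ₗ[F] V)} [Finite Γ] [Group.IsSolvable Γ]
    (hcard : (Nat.card Γ : F) ≠ 0) {v : Fin 3 → V} (hli : LinearIndependent F v)
    (hv : ∀ i, B (v i) (v i) ≠ 0) (h01 : B (v 0) (v 1) ≠ 0) (h12 : B (v 1) (v 2) ≠ 0)
    (hr : ∀ i, ∃ g ∈ Γ, ∀ x, g x = orthoReflection B (v i) x) : 3 ∣ Nat.card Γ := by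
  let X := Submodule.span F (Set.range v)
  have hX : finrank F X = 3 := by simpa using finrank_span_eq_card hli
  have : FiniteDimensional F X := FiniteDimensional.of_finrank_pos (by omega)
  let a : Fin 3 → X := fun i => ⟨v i, Submodule.subset_span ⟨i, rfl⟩⟩
  have ha : Submodule.span F (Set.range a) = ⊤ := by
    refine Submodule.map_injective_of_injective X.injective_subtype ?_
    rw [Submodule.map_span, ← Set.range_comp, Submodule.map_subtype_top]
    rfl
  have hsX : (B.restrict X).IsSymm := ⟨fun x y => hs.eq x y⟩
  choose s hs_mem hs_eq using fun i => orthoReflection_restrict_mem_range (a i) (hr i)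
  have hle : Subgroup.closure (Set.range s) ≤ (restrictHom Γ X).range :=
    (Subgroup.closure_le _).mpr (Set.range_subset_iff.mpr hs_mem)
  have hdvd : Nat.card (Subgroup.closure (Set.range s)) ∣ Nat.card Γ :=
    (Subgroup.card_dvd_of_le hle).trans
      ((Subgroup.card_range_dvd _).trans (Subgroup.card_subgroup_dvd_card _))
  have : Finite (restrictHom Γ X).range :=
    Finite.of_surjective _ (restrictHom Γ X).rangeRestrict_surjective
  have : Finite (Subgroup.closure (Set.range s)) :=
    Finite.of_injective _ (Subgroup.inclusion_injective hle)
  have : Group.IsSolvable (restrictHom Γ X).range :=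
    Group.isSolvable_of_surjective (restrictHom Γ X).rangeRestrict_surjective
  have : Group.IsSolvable (Subgroup.closure (Set.range s)) :=
    Group.isSolvable_of_isSolvable_injective (Subgroup.inclusion_injective hle)
  refine (three_dvd_card_closure_reflections hsX h2 hX ha hv (reflTransGen_fin_three
    (fun i j h => (hsX.eq _ _).trans_ne h) ((hsX.eq _ _).trans_ne h01)
    ((hsX.eq _ _).trans_ne h12)) hs_eq 0 fun h => hcard ?_).trans hdvd
  exact zero_dvd_iff.mp (h ▸ Nat.cast_dvd_cast hdvd)

end Restriction

section RowAction

variable {F : Type*} [Field F] {n : ℕ}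

/-- The left action of `GL n` on row vectors, `g` acting as `x ↦ x * g⁻¹`. -/
def rowAction (F : Type*) [Field F] (n : ℕ) :
    GL (Fin n) F →* ((Fin n → F) ≃ₗ[F] (Fin n → F)) where
  toFun g := toLinearEquivRight'OfInv (M' := (g⁻¹ : GL (Fin n) F).1) g.mul_inv g.inv_mul
  map_one' := LinearEquiv.ext fun x => by
    change x ᵥ* (1⁻¹ : GL (Fin n) F).1 = x
    rw [inv_one, Units.val_one, vecMul_one]
  map_mul' g h := LinearEquiv.ext fun x => by
    change x ᵥ* ((g * h)⁻¹ : GL (Fin n) F).1 = x ᵥ* (h⁻¹ : GL (Fin n) F).1 ᵥ* (g⁻¹ : GL (Fin n) F).1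
    rw [_root_.mul_inv_rev, Units.val_mul, vecMul_vecMul]

lemma rowAction_inv_apply (g : GL (Fin n) F) (x : Fin n → F) :
    rowAction F n g⁻¹ x = x ᵥ* (g : Matrix (Fin n) (Fin n) F) := by
  change x ᵥ* (g⁻¹⁻¹ : GL (Fin n) F).1 = _
  rw [inv_inv]

/-- `v` is a root of the linear group `K` for the form `B`: it is anisotropic and the reflection
along it belongs to `K`. -/
def IsRoot (B : LinearMap.BilinForm F (Fin n → F)) (K : Subgroup (GL (Fin n) F))
    (v : Fin n → F) : Prop :=
  B v v ≠ 0 ∧ ∃ g ∈ K, ∀ x : Fin n → F,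
    x ᵥ* (g : Matrix (Fin n) (Fin n) F) = orthoReflection B v x

theorem three_dvd_card_of_isRoot {B : LinearMap.BilinForm F (Fin n → F)} (hs : B.IsSymm)
    (h2 : (2 : F) ≠ 0) {K : Subgroup (GL (Fin n) F)} [Finite K] [Group.IsSolvable K]
    (hcard : (Nat.card K : F) ≠ 0) {v : Fin 3 → Fin n → F} (hli : LinearIndependent F v)
    (hv : ∀ i, IsRoot B K (v i)) (h01 : B (v 0) (v 1) ≠ 0) (h12 : B (v 1) (v 2) ≠ 0) :
    3 ∣ Nat.card K := by
  have hdvd := K.card_map_dvd (rowAction F n)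
  have hsurj := (rowAction F n).subgroupMap_surjective K
  have : Finite (K.map (rowAction F n)) := Finite.of_surjective _ hsurj
  have : Group.IsSolvable (K.map (rowAction F n)) := Group.isSolvable_of_surjective hsurj
  refine (three_dvd_card_of_orthoReflection_mem hs h2 (fun h => hcard ?_) hli
    (fun i => (hv i).1) h01 h12 fun i => ?_).trans hdvd
  · exact zero_dvd_iff.mp (h ▸ Nat.cast_dvd_cast hdvd)
  · obtain ⟨-, g, hg, hgx⟩ := hv i
    exact ⟨_, ⟨g⁻¹, inv_mem hg, rfl⟩, fun x => (rowAction_inv_apply g x).trans (hgx x)⟩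

end RowAction

section RootTransport

variable {F : Type*} [Field F] {n : ℕ} {B : LinearMap.BilinForm F (Fin n → F)}
  {K : Subgroup (GL (Fin n) F)}

lemma vecMul_inv_vecMul {m : Type*} [Fintype m] [DecidableEq m] (g : GL m F) (x : m → F) :
    x ᵥ* (g⁻¹ : GL m F).1 ᵥ* g.1 = x := by
  rw [vecMul_vecMul, g.inv_mul, vecMul_one]

lemma vecMul_vecMul_inv {m : Type*} [Fintype m] [DecidableEq m] (g : GL m F) (x : m → F) :
    x ᵥ* g.1 ᵥ* (g⁻¹ : GL m F).1 = x := by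
  rw [vecMul_vecMul, g.mul_inv, vecMul_one]

lemma IsRoot.vecMul {v : Fin n → F} (hv : IsRoot B K v) {g : GL (Fin n) F} (hg : g ∈ K)
    (hgB : g ∈ similitudeGroup fun x y => B x y) : IsRoot B K (v ᵥ* g.1) := by
  obtain ⟨c, hc⟩ := hgB
  beta_reduce at hc
  obtain ⟨hvv, r, hr, hrx⟩ := hv
  refine ⟨by rw [hc]; exact mul_ne_zero c.ne_zero hvv, g⁻¹ * r * g,
    mul_mem (mul_mem (inv_mem hg) hr) hg, fun x => ?_⟩
  obtain ⟨y, rfl⟩ : ∃ y, y ᵥ* g.1 = x := ⟨_, vecMul_inv_vecMul g x⟩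
  rw [Units.val_mul, Units.val_mul, ← vecMul_vecMul, ← vecMul_vecMul, vecMul_vecMul_inv, hrx,
    orthoReflection_apply, orthoReflection_apply, hc, hc, sub_vecMul, smul_vecMul,
    mul_left_comm, mul_div_mul_left _ _ c.ne_zero]

end RootTransport

section DiagForm

variable {F : Type*} [Field F] {n : ℕ}

/-- The diagonal bilinear form `∑ i, b i * x i * y i`. -/
def diagForm (b : Fin n → F) : LinearMap.BilinForm F (Fin n → F) := Matrix.toBilin' (diagonal b)

lemma diagForm_apply (b x y : Fin n → F) : diagForm b x y = ∑ i, b i * x i * y i := by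
  rw [diagForm, toBilin'_apply', dotProduct]
  simp only [mulVec_diagonal, mul_left_comm, mul_assoc]

lemma isSymm_diagForm (b : Fin n → F) : (diagForm b).IsSymm :=
  ⟨fun x y => by simp only [diagForm_apply, mul_right_comm]⟩

lemma diagForm_single_right (b x : Fin n → F) (i : Fin n) :
    diagForm b x (Pi.single i 1) = b i * x i := by
  simp [diagForm_apply, Pi.single_apply]

lemma diagForm_single_left (b x : Fin n → F) (i : Fin n) :
    diagForm b (Pi.single i 1) x = b i * x i := by
  simp [diagForm_apply, Pi.single_apply]

lemma exists_ne_zero_of_diagForm_ne_zero {b x y : Fin n → F} (h : diagForm b x y ≠ 0) :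
    ∃ i, x i ≠ 0 ∧ y i ≠ 0 := by
  contrapose! h
  rw [diagForm_apply]
  refine Finset.sum_eq_zero fun i _ => ?_
  by_cases hx : x i = 0
  · rw [hx, mul_zero, zero_mul]
  · rw [h i hx, mul_zero]

end DiagForm

section Block

variable {n : ℕ}

/-- The index of the block `{2k, 2k + 1}` containing `i`. -/
def blockIdx (i : Fin n) : ℕ := i / 2

/-- The block of `i` consists of two coordinates, neither of which is the last one. -/
def IsInner (i : Fin n) : Prop := 2 * blockIdx i + 2 < n

lemma blockIdx_eq_of_not_isInner {i : Fin n} (h : ¬ IsInner i) : blockIdx i = (n - 1) / 2 := by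
  unfold IsInner blockIdx at *
  omega

lemma IsInner.of_blockIdx_eq {i j : Fin n} (h : IsInner i) (hb : blockIdx j = blockIdx i) :
    IsInner j := by
  rwa [IsInner, hb]

lemma IsInner.lt {i : Fin n} (h : IsInner i) : (i : ℕ) + 1 < n := by
  unfold IsInner blockIdx at h
  omega

lemma IsInner.exists_ne {i : Fin n} (h : IsInner i) : ∃ j, j ≠ i ∧ blockIdx j = blockIdx i := by
  unfold IsInner blockIdx at *
  simp only [ne_eq, Fin.ext_iff]
  rcases Nat.mod_two_eq_zero_or_one i with hi | hi
  · exact ⟨⟨i + 1, by omega⟩, by simp only; omega, by simp only; omega⟩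
  · exact ⟨⟨i - 1, by omega⟩, by simp only; omega, by simp only; omega⟩

lemma eq_or_eq_of_blockIdx_eq {i j k : Fin n} (hij : j ≠ i) (hj : blockIdx j = blockIdx i)
    (hk : blockIdx k = blockIdx i) : k = i ∨ k = j := by
  unfold blockIdx at *
  simp only [ne_eq, Fin.ext_iff] at *
  omega

lemma exists_ne_zero_of_mul_apply_ne_zero {l m o R : Type*} [Fintype m]
    [NonUnitalNonAssocSemiring R] {A : Matrix l m R} {B : Matrix m o R} {i : l} {k : o}
    (h : (A * B) i k ≠ 0) : ∃ j, A i j ≠ 0 ∧ B j k ≠ 0 := by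
  obtain ⟨j, -, hj⟩ := Finset.exists_ne_zero_of_sum_ne_zero h
  exact ⟨j, left_ne_zero_of_mul hj, right_ne_zero_of_mul hj⟩

/-- The nonzero entries of any two rows in the same fibre of `f` lie in columns of a common fibre
of `f`. -/
def PreservesFibers {m R κ : Type*} [Zero R] (f : m → κ) (G : Matrix m m R) : Prop :=
  ∀ ⦃i i' j j'⦄, f i = f i' → G i j ≠ 0 → G i' j' ≠ 0 → f j = f j'

end Block

section BlockReflectionGroup

variable {F : Type*} [Field F] {n : ℕ}

/-- A group of similitudes of `diagForm b` that contains the reflections along the coordinate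
vectors and along their differences within each inner block, but has no path of three linearly
independent roots. -/
structure IsBlockReflectionGroup (b : Fin n → F) (K : Subgroup (GL (Fin n) F)) : Prop where
  le_similitudeGroup : K ≤ similitudeGroup fun x y => diagForm b x y
  isRoot_single : ∀ i, IsRoot (diagForm b) K (Pi.single i 1)
  isRoot_sub : ∀ ⦃i j⦄, IsInner i → j ≠ i → blockIdx j = blockIdx i →
    IsRoot (diagForm b) K (Pi.single i 1 - Pi.single j 1)
  not_linearIndependent : ∀ v : Fin 3 → Fin n → F, (∀ i, IsRoot (diagForm b) K (v i)) →
    diagForm b (v 0) (v 1) ≠ 0 → diagForm b (v 1) (v 2) ≠ 0 → ¬ LinearIndependent F v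

namespace IsBlockReflectionGroup

variable {b : Fin n → F} {K : Subgroup (GL (Fin n) F)} (hK : IsBlockReflectionGroup b K)
include hK

lemma coeff_ne_zero (i : Fin n) : b i ≠ 0 := by
  have h := (hK.isRoot_single i).1
  rwa [diagForm_single_left, Pi.single_eq_same, mul_one] at h

lemma isRoot_vecMul {v : Fin n → F} (hv : IsRoot (diagForm b) K v) {g : GL (Fin n) F}
    (hg : g ∈ K) : IsRoot (diagForm b) K (v ᵥ* g.1) :=
  hv.vecMul hg (hK.le_similitudeGroup hg)

lemma blockIdx_eq_of_isInner {v : Fin n → F} (hv : IsRoot (diagForm b) K v) {i k : Fin n}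
    (hi : IsInner i) (hvi : v i ≠ 0) (hvk : v k ≠ 0) : blockIdx k = blockIdx i := by
  by_contra hne
  obtain ⟨j, hji, hj⟩ := hi.exists_ne
  have hki : k ≠ i := fun h => hne (h ▸ rfl)
  have hkj : k ≠ j := fun h => hne (h ▸ hj)
  refine hK.not_linearIndependent ![v, Pi.single i 1, Pi.single i 1 - Pi.single j 1] ?_ ?_ ?_ ?_
  · intro t
    fin_cases t
    exacts [hv, hK.isRoot_single i, hK.isRoot_sub hi hji hj]
  · simpa [diagForm_single_right] using ⟨hK.coeff_ne_zero i, hvi⟩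
  · simpa [diagForm_single_left, hji.symm] using hK.coeff_ne_zero i
  · rw [Fintype.linearIndependent_iff]
    intro s hs
    simp only [Fin.sum_univ_three, cons_val] at hs
    have hsk : s 0 = 0 := by simpa [hki, hkj, hvk] using congrFun hs k
    have hsj : s 2 = 0 := by simpa [hji, hsk] using congrFun hs j
    have hsi : s 1 = 0 := by simpa [hji.symm, hsk, hsj] using congrFun hs i
    intro t
    fin_cases t
    exacts [hsk, hsi, hsj]

lemma blockIdx_eq_of_isRoot {v : Fin n → F} (hv : IsRoot (diagForm b) K v) {i k : Fin n}
    (hvi : v i ≠ 0) (hvk : v k ≠ 0) : blockIdx k = blockIdx i := by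
  by_cases hi : IsInner i
  · exact hK.blockIdx_eq_of_isInner hv hi hvi hvk
  by_cases hk : IsInner k
  · exact (hK.blockIdx_eq_of_isInner hv hk hvk hvi).symm
  · rw [blockIdx_eq_of_not_isInner hi, blockIdx_eq_of_not_isInner hk]

lemma blockIdx_eq_of_row {g : GL (Fin n) F} (hg : g ∈ K) {i k l : Fin n} (hk : g.1 i k ≠ 0)
    (hl : g.1 i l ≠ 0) : blockIdx k = blockIdx l := by
  have h := hK.isRoot_vecMul (hK.isRoot_single i) hg
  rw [single_one_vecMul] at h
  exact hK.blockIdx_eq_of_isRoot h hl hk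

lemma blockIdx_eq_of_rows_of_isInner {g : GL (Fin n) F} (hg : g ∈ K) {i j k l : Fin n}
    (hi : IsInner i) (hj : blockIdx j = blockIdx i) (hk : g.1 i k ≠ 0) (hl : g.1 j l ≠ 0) :
    blockIdx k = blockIdx l := by
  obtain rfl | hji := eq_or_ne j i
  · exact hK.blockIdx_eq_of_row hg hk hl
  obtain ⟨c, hc⟩ := hK.le_similitudeGroup hg
  beta_reduce at hc
  have hne : diagForm b (Pi.single i 1 ᵥ* g.1) ((Pi.single i 1 - Pi.single j 1) ᵥ* g.1) ≠ 0 := by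
    rw [hc]
    simpa [diagForm_single_left, hji.symm] using hK.coeff_ne_zero i
  have hroot := hK.isRoot_vecMul (hK.isRoot_sub hi hji hj) hg
  rw [sub_vecMul, single_one_vecMul, single_one_vecMul] at hne hroot
  obtain ⟨m, hm, hm'⟩ := exists_ne_zero_of_diagForm_ne_zero hne
  by_cases hil : g.1 i l = 0
  · rw [hK.blockIdx_eq_of_row hg hk hm]
    exact hK.blockIdx_eq_of_isRoot hroot (by simpa [hil] using hl) hm'
  · exact hK.blockIdx_eq_of_row hg hk hil

lemma eq_or_eq_of_inv_apply_ne_zero {g : GL (Fin n) F} (hg : g ∈ K) {i i' j s m : Fin n}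
    (hii : i' ≠ i) (hi : blockIdx i' = blockIdx i) (hj : IsInner j) (hij : g.1 i j ≠ 0)
    (hs : blockIdx s = blockIdx j) (hm : (g⁻¹).1 s m ≠ 0) : m = i ∨ m = i' := by
  obtain ⟨t, hit, hti⟩ : ∃ t, g.1 i t ≠ 0 ∧ (g⁻¹).1 t i ≠ 0 :=
    exists_ne_zero_of_mul_apply_ne_zero (by rw [g.mul_inv, one_apply_eq]; exact one_ne_zero)
  have ht : blockIdx t = blockIdx j := hK.blockIdx_eq_of_row hg hit hij
  exact eq_or_eq_of_blockIdx_eq hii hi (hK.blockIdx_eq_of_rows_of_isInner (inv_mem hg)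
    (hj.of_blockIdx_eq ht) (hs.trans ht.symm) hti hm).symm

lemma blockIdx_eq_of_row_isInner {g : GL (Fin n) F} (hg : g ∈ K) {i i' j j' : Fin n}
    (hii : i' ≠ i) (hi : blockIdx i' = blockIdx i) (hj : IsInner j) (hij : g.1 i j ≠ 0)
    (hij' : g.1 i' j' ≠ 0) : blockIdx j' = blockIdx j := by
  by_contra hne
  have hGij' : g.1 i j' = 0 := by
    by_contra h
    exact hne (hK.blockIdx_eq_of_row hg h hij)
  have hsum (s m : Fin n) (hs : blockIdx s = blockIdx j) :
      (g⁻¹).1 s i * g.1 i m + (g⁻¹).1 s i' * g.1 i' m = (1 : Matrix (Fin n) (Fin n) F) s m := by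
    rw [← g.inv_mul, mul_apply, Fintype.sum_eq_add i i' hii.symm]
    rintro x ⟨hxi, hxi'⟩
    have hx : (g⁻¹).1 s x = 0 := by
      by_contra h
      exact (hK.eq_or_eq_of_inv_apply_ne_zero hg hii hi hj hij hs h).elim hxi hxi'
    rw [hx, zero_mul]
  have hinv (s : Fin n) (hs : blockIdx s = blockIdx j) : (g⁻¹).1 s i' = 0 := by
    have h := hsum s j' hs
    rw [hGij', mul_zero, zero_add, one_apply_ne (by rintro rfl; exact hne hs)] at h
    exact (mul_eq_zero.mp h).resolve_right hij'
  obtain ⟨l, hlj, hl⟩ := hj.exists_ne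
  have hjj := hsum j j rfl
  have hjl := hsum j l rfl
  have hll := hsum l l hl
  rw [hinv j rfl, zero_mul, add_zero, one_apply_eq] at hjj
  rw [hinv j rfl, zero_mul, add_zero, one_apply_ne hlj.symm] at hjl
  rw [hinv l hl, zero_mul, add_zero, one_apply_eq] at hll
  rcases mul_eq_zero.mp hjl with h | h
  · exact zero_ne_one (by rwa [h, zero_mul] at hjj)
  · exact zero_ne_one (by rwa [h, mul_zero] at hll)

theorem preservesFibers_blockIdx {g : GL (Fin n) F} (hg : g ∈ K) :
    PreservesFibers blockIdx g.1 := by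
  intro i i' j j' hii hj hj'
  by_cases hi : IsInner i
  · exact hK.blockIdx_eq_of_rows_of_isInner hg hi hii.symm hj hj'
  obtain rfl | hne := eq_or_ne i' i
  · exact hK.blockIdx_eq_of_row hg hj hj'
  by_cases hinner : IsInner j
  · exact (hK.blockIdx_eq_of_row_isInner hg hne hii.symm hinner hj hj').symm
  by_cases hinner' : IsInner j'
  · exact hK.blockIdx_eq_of_row_isInner hg hne.symm hii hinner' hj' hj
  · rw [blockIdx_eq_of_not_isInner hinner, blockIdx_eq_of_not_isInner hinner']

end IsBlockReflectionGroup

end BlockReflectionGroup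

section Monomial

variable {m κ κ' F : Type*} [Field F]

/-- `G` is a monomial matrix whose nonzero entries are in the positions `(i, σ i)`. -/
def IsMonomial (σ : Equiv.Perm m) (G : Matrix m m F) : Prop :=
  ∀ i j, G i j ≠ 0 ↔ j = σ i

lemma exists_isMonomial [Fintype m] [DecidableEq m] {f : m → κ} {f' : m → κ'}
    (hsep : ∀ i j, f i = f j → f' i = f' j → i = j) (g : GL m F) (hf : PreservesFibers f g.1)
    (hf' : PreservesFibers f' g.1) : ∃ σ, IsMonomial σ g.1 := by
  have hrow (i : m) : ∃ j, g.1 i j ≠ 0 := by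
    obtain ⟨j, hj, -⟩ : ∃ j, g.1 i j ≠ 0 ∧ (g⁻¹).1 j i ≠ 0 :=
      exists_ne_zero_of_mul_apply_ne_zero (by rw [g.mul_inv, one_apply_eq]; exact one_ne_zero)
    exact ⟨j, hj⟩
  have hcol (j : m) : ∃ i, g.1 i j ≠ 0 := by
    obtain ⟨i, -, hi⟩ : ∃ i, (g⁻¹).1 j i ≠ 0 ∧ g.1 i j ≠ 0 :=
      exists_ne_zero_of_mul_apply_ne_zero (by rw [g.inv_mul, one_apply_eq]; exact one_ne_zero)
    exact ⟨i, hi⟩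
  choose σ hσ using hrow
  have hmono (i j : m) (h : g.1 i j ≠ 0) : j = σ i :=
    hsep _ _ (hf rfl h (hσ i)) (hf' rfl h (hσ i))
  have hsurj : Function.Surjective σ := fun j => (hcol j).imp fun i hi => (hmono i j hi).symm
  refine ⟨Equiv.ofBijective σ (Finite.injective_iff_bijective.mp
    (Finite.injective_iff_surjective.mpr hsurj)), fun i j => ⟨hmono i j, ?_⟩⟩
  rintro rfl
  exact hσ i

namespace IsMonomial

variable {σ : Equiv.Perm m} {G : Matrix m m F} (hG : IsMonomial σ G)
include hG

lemma apply_self_ne_zero (i : m) : G i (σ i) ≠ 0 := (hG i _).mpr rfl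

lemma apply_eq_zero {i j : m} (h : j ≠ σ i) : G i j = 0 := by
  by_contra hne
  exact h ((hG i j).mp hne)

lemma fiber_eq {f : m → κ} (hf : PreservesFibers f G) {i j : m} (h : f i = f j) :
    f (σ i) = f (σ j) :=
  hf h (hG.apply_self_ne_zero i) (hG.apply_self_ne_zero j)

lemma mulVec_apply [Fintype m] (α : m → F) (i : m) : (G *ᵥ α) i = G i (σ i) * α (σ i) := by
  rw [mulVec, dotProduct, Fintype.sum_eq_single (σ i)]
  intro j hj
  rw [hG.apply_eq_zero hj, zero_mul]

lemma eq_diagonal [DecidableEq m] (hσ : ∀ i, σ i = i) : G = diagonal fun i => G i i := by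
  ext i j
  obtain rfl | hij := eq_or_ne i j
  · rw [diagonal_apply_eq]
  · rw [diagonal_apply_ne _ hij, hG.apply_eq_zero (by rw [hσ]; exact hij.symm)]

end IsMonomial

end Monomial

section ReflectionMatrix

variable {m κ F : Type*} [Fintype m] [DecidableEq m] [Field F]

/-- The rank one perturbation `1 - α vᵀ` of the identity matrix, which acts on row vectors by
`x ↦ x - (x ⬝ᵥ α) • v`. All reflections have this shape. -/
def reflectionMatrix (α v : m → F) : Matrix m m F := 1 - vecMulVec α v

lemma reflectionMatrix_mul_mul_apply (α v : m → F) (G : Matrix m m F) (i j : m) :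
    (reflectionMatrix α v * G * reflectionMatrix α v) i j =
      G i j - α i * (v ᵥ* G) j - (G *ᵥ α) i * v j + α i * (v ⬝ᵥ G *ᵥ α) * v j := by
  have hexpand : reflectionMatrix α v * G * reflectionMatrix α v =
      G - vecMulVec α v * G - G * vecMulVec α v + vecMulVec α v * (G * vecMulVec α v) := by
    unfold reflectionMatrix
    noncomm_ring
  rw [hexpand, mul_vecMulVec, vecMulVec_mul, vecMulVec_mul_vecMulVec]
  simp only [Matrix.add_apply, Matrix.sub_apply, vecMulVec_apply, Pi.smul_apply, smul_eq_mul]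
  ring

lemma IsMonomial.eq_zero_of_reflectionMatrix_conj {σ : Equiv.Perm m} {G : Matrix m m F}
    (hG : IsMonomial σ G) {f : m → κ} {α v : m → F} (hα : ∀ i, α i = 0 ↔ v i = 0)
    (hf : PreservesFibers f (reflectionMatrix α v * G * reflectionMatrix α v))
    (hv : ∀ k, ∃ p q, p ≠ k ∧ q ≠ k ∧ v p ≠ 0 ∧ v q ≠ 0 ∧ f p ≠ f q) {i : m} (hi : v i = 0) :
    v (σ i) = 0 := by
  by_contra hσi
  obtain ⟨p, q, hp, hq, hvp, hvq, hpq⟩ := hv (σ i)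
  have hrow (k : m) (hk : k ≠ σ i) (hvk : v k ≠ 0) :
      (reflectionMatrix α v * G * reflectionMatrix α v) i k ≠ 0 := by
    rw [reflectionMatrix_mul_mul_apply, (hα i).mpr hi, hG.apply_eq_zero hk, hG.mulVec_apply]
    simpa using ⟨⟨hG.apply_self_ne_zero i, (hα _).not.mpr hσi⟩, hvk⟩
  exact hpq (hf rfl (hrow p hp hvp) (hrow q hq hvq))

section Diagonal

variable {l α v : m → F}

lemma reflectionMatrix_mul_diagonal_mul_apply (i j : m) :
    (reflectionMatrix α v * diagonal l * reflectionMatrix α v) i j =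
      diagonal l i j + α i * v j * (v ⬝ᵥ diagonal l *ᵥ α - (l i + l j)) := by
  rw [reflectionMatrix_mul_mul_apply, vecMul_diagonal, mulVec_diagonal]
  ring

lemma add_eq_of_reflectionMatrix_conj_apply_eq_zero (hα : ∀ i, α i = 0 ↔ v i = 0) {i j : m}
    (hij : i ≠ j) (hi : v i ≠ 0) (hj : v j ≠ 0)
    (h : (reflectionMatrix α v * diagonal l * reflectionMatrix α v) i j = 0) :
    l i + l j = v ⬝ᵥ diagonal l *ᵥ α := by
  rw [reflectionMatrix_mul_diagonal_mul_apply, diagonal_apply_ne _ hij, zero_add] at h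
  have hne : α i * v j ≠ 0 := mul_ne_zero ((hα i).not.mpr hi) hj
  exact (sub_eq_zero.mp ((mul_eq_zero.mp h).resolve_left hne)).symm

variable {f : m → κ} (hl : ∀ i, l i ≠ 0) (hα : ∀ i, α i = 0 ↔ v i = 0)
  (hf : PreservesFibers f (reflectionMatrix α v * diagonal l * reflectionMatrix α v))
include hl hα hf

/- If row `i` met a second fibre, then its entries in `i`, `i'` and `k` and the entry `(i', k)`
would all vanish, which forces `l i = 0`. -/
lemma fiber_eq_of_reflectionMatrix_conj_apply_ne_zero {i i' j k : m} (hi : v i ≠ 0)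
    (hii : i' ≠ i) (hfi : f i' = f i) (hk : v k ≠ 0) (hki : f k ≠ f i) (hkj : f k ≠ f j)
    (hij : (reflectionMatrix α v * diagonal l * reflectionMatrix α v) i j ≠ 0) : f j = f i := by
  by_cases hi' : v i' = 0
  · rw [← hfi]
    refine hf hfi.symm hij ?_
    rw [reflectionMatrix_mul_diagonal_mul_apply, (hα i').mpr hi', diagonal_apply_eq]
    simpa using hl i'
  by_contra hne
  have hzero (s t : m) (hs : f s = f i) (ht : f t ≠ f j) :
      (reflectionMatrix α v * diagonal l * reflectionMatrix α v) s t = 0 := by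
    by_contra h
    exact ht (hf hs h hij)
  have hik : i ≠ k := fun h => hki (h ▸ rfl)
  have hik' : i' ≠ k := fun h => hki (h ▸ hfi)
  have hdiag := hzero i i rfl (Ne.symm hne)
  rw [reflectionMatrix_mul_diagonal_mul_apply, diagonal_apply_eq] at hdiag
  have hsum := add_eq_of_reflectionMatrix_conj_apply_eq_zero hα hii.symm hi hi'
    (hzero i i' rfl (by rw [hfi]; exact Ne.symm hne))
  have hsum_k := add_eq_of_reflectionMatrix_conj_apply_eq_zero hα hik hi hk (hzero i k rfl hkj)
  have hsum_k' := add_eq_of_reflectionMatrix_conj_apply_eq_zero hα hik' hi' hk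
    (hzero i' k hfi hkj)
  apply hl i
  linear_combination hdiag + α i * v i * (hsum + hsum_k - hsum_k')

theorem eq_of_reflectionMatrix_conj {p q r : m} (hp : v p ≠ 0) (hq : v q ≠ 0) (hr : v r ≠ 0)
    (hpq : f p ≠ f q) (hpr : f p ≠ f r) (hqr : f q ≠ f r) (hp' : ∃ i, i ≠ p ∧ f i = f p)
    (hq' : ∃ i, i ≠ q ∧ f i = f q) {i : m} (hi : v i ≠ 0) : l i = l p := by
  have hsum (s t : m) (hs : v s ≠ 0) (ht : v t ≠ 0) (hst : f s ≠ f t)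
      (hs' : ∃ i, i ≠ s ∧ f i = f s) : l s + l t = v ⬝ᵥ diagonal l *ᵥ α := by
    obtain ⟨s', hs'ne, hs'f⟩ := hs'
    obtain ⟨k, hk, hks, hkt⟩ : ∃ k, v k ≠ 0 ∧ f k ≠ f s ∧ f k ≠ f t := by
      by_cases hfp : f p ≠ f s ∧ f p ≠ f t
      · exact ⟨p, hp, hfp⟩
      by_cases hfq : f q ≠ f s ∧ f q ≠ f t
      · exact ⟨q, hq, hfq⟩
      · exact ⟨r, hr, by grind⟩
    refine add_eq_of_reflectionMatrix_conj_apply_eq_zero hα (fun h => hst (h ▸ rfl)) hs ht ?_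
    by_contra h
    exact hst (fiber_eq_of_reflectionMatrix_conj_apply_ne_zero hl hα hf hs hs'ne hs'f hk hks hkt
      h).symm
  have hsum_pq := hsum p q hp hq hpq hp'
  by_cases hip : f i = f p
  · have hsum_qi := hsum q i hq hi (by rw [hip]; exact hpq.symm) hq'
    linear_combination hsum_qi - hsum_pq
  · have hsum_pi := hsum p i hp hi (Ne.symm hip) hp'
    have hsum_pr := hsum p r hp hr hpr hp'
    have hsum_qr := hsum q r hq hr hqr hq'
    linear_combination hsum_pi - hsum_pq + hsum_qr - hsum_pr

end Diagonal

end ReflectionMatrix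

section ShiftedBlock

variable {n : ℕ}

/-- The index of the block of `i` in the partition obtained from the standard one by rotating all
coordinates but the last: `{1, 2}`, `{3, 4}`, and so on. -/
def shiftedBlockIdx (i : Fin n) : ℕ :=
  if i.1 = 0 then (n - 2) / 2 else if i.1 + 1 < n then (i.1 - 1) / 2 else (n - 1) / 2

lemma eq_of_blockIdx_eq_of_shiftedBlockIdx_eq (hn : 4 ≤ n) (i j : Fin n)
    (h : blockIdx i = blockIdx j) (h' : shiftedBlockIdx i = shiftedBlockIdx j) : i = j := by
  unfold blockIdx at h
  unfold shiftedBlockIdx at h'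
  split_ifs at h' <;> omega

variable {σ : Equiv.Perm (Fin n)}
  (hσ : ∀ i j : Fin n, blockIdx i = blockIdx j → blockIdx (σ i) = blockIdx (σ j))
  (hσ' : ∀ i j : Fin n, shiftedBlockIdx i = shiftedBlockIdx j →
    shiftedBlockIdx (σ i) = shiftedBlockIdx (σ j))
include hσ hσ'

/- The two partitions link the coordinates into the path `0, 1, 2, ...`. -/
lemma apply_eq_self_of_preserves_blockIdx (hn : 0 < n) (h0 : σ ⟨0, hn⟩ = ⟨0, hn⟩) (i : Fin n) :
    σ i = i := by
  induction i using WellFoundedLT.induction with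
  | ind i ih =>
    have hle : i ≤ σ i := by
      by_contra h
      exact h (σ.injective (ih _ (not_le.mp h))).ge
    refine le_antisymm ?_ hle
    obtain rfl | hi := eq_or_ne i ⟨0, hn⟩
    · exact h0.le
    have hi0 : i.1 ≠ 0 := fun h => hi (Fin.ext h)
    let k : Fin n := ⟨i - 1, by omega⟩
    have hk : σ k = k := ih k (Fin.lt_def.mpr (by simp only [k]; omega))
    have hblock := hσ i k
    have hshift := hσ' i k
    rw [hk] at hblock hshift
    have hlt := (σ i).2
    rw [Fin.le_def] at hle ⊢
    rcases Nat.even_or_odd' i.1 with ⟨t, ht | ht⟩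
    · simp only [shiftedBlockIdx, k] at hshift
      split_ifs at hshift <;> omega
    · simp only [blockIdx, k] at hblock
      omega

lemma apply_two_ne_zero_of_preserves_blockIdx (hn : 7 ≤ n)
    (h0 : σ (Fin.castLE hn 0) = Fin.castLE hn 2) : σ (Fin.castLE hn 2) ≠ Fin.castLE hn 0 := by
  intro h2
  have h1 : σ (Fin.castLE hn 1) ≠ Fin.castLE hn 2 := by
    rw [← h0, σ.injective.ne_iff]
    simp [Fin.ext_iff]
  have hblock := hσ (Fin.castLE hn 1) (Fin.castLE hn 0) (by simp [blockIdx])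
  have hshift := hσ' (Fin.castLE hn 1) (Fin.castLE hn 2) (by
    simp [shiftedBlockIdx, show 2 < n by omega, show 3 < n by omega])
  rw [h0] at hblock
  rw [h2] at hshift
  have hlt := (σ (Fin.castLE hn 1)).2
  rw [ne_eq, Fin.ext_iff] at h1
  simp only [Fin.isValue, Fin.val_castLE, Fin.coe_ofNat_eq_mod, Nat.reduceMod, blockIdx,
    Order.lt_two_iff, zero_le, Nat.div_self, shiftedBlockIdx, Nat.zero_mod, ↓reduceIte,
    ite_eq_left_iff] at h1 hblock hshift
  split_ifs at hshift <;> omega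

end ShiftedBlock

section ScalarCriterion

variable {F : Type*} [Field F] {n : ℕ}

lemma apply_eq_self_of_isMonomial (hn : 7 ≤ n) {g : Matrix (Fin n) (Fin n) F}
    (hg : PreservesFibers blockIdx g) (hg' : PreservesFibers shiftedBlockIdx g)
    {σ : Equiv.Perm (Fin n)} (hσ : IsMonomial σ g) {α v : Fin n → F}
    (hα : ∀ i, α i = 0 ↔ v i = 0)
    (hv₀ : v (Fin.castLE hn 0) = 0)
    (hv : ∀ i, v i = 0 → i = Fin.castLE hn 0 ∨ i = Fin.castLE hn 2)
    (hf : PreservesFibers blockIdx (reflectionMatrix α v * g * reflectionMatrix α v))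
    (i : Fin n) : σ i = i := by
  have hvne (k : Fin 7) (h0 : k ≠ 0) (h2 : k ≠ 2) : v (Fin.castLE hn k) ≠ 0 :=
    fun h => (hv _ h).elim (by simpa using h0) (by simpa using h2)
  have hzero (i : Fin n) (hi : v i = 0) : v (σ i) = 0 := by
    refine hσ.eq_zero_of_reflectionMatrix_conj hα hf (fun k => ?_) hi
    by_cases h1 : k = Fin.castLE hn 1
    · exact ⟨Fin.castLE hn 3, Fin.castLE hn 5, by simp [h1], by simp [h1],
        hvne 3 (by decide) (by decide), hvne 5 (by decide) (by decide), by simp [blockIdx]⟩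
    by_cases h3 : k = Fin.castLE hn 3
    · exact ⟨Fin.castLE hn 1, Fin.castLE hn 5, by simp [h3], by simp [h3],
        hvne 1 (by decide) (by decide), hvne 5 (by decide) (by decide), by simp [blockIdx]⟩
    · exact ⟨Fin.castLE hn 1, Fin.castLE hn 3, Ne.symm h1, Ne.symm h3,
        hvne 1 (by decide) (by decide), hvne 3 (by decide) (by decide), by simp [blockIdx]⟩
  have hblock (i j : Fin n) := hσ.fiber_eq hg (i := i) (j := j)
  have hshift (i j : Fin n) := hσ.fiber_eq hg' (i := i) (j := j)
  refine apply_eq_self_of_preserves_blockIdx hblock hshift (by omega) ?_ i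
  refine (hv _ (hzero _ hv₀)).resolve_right fun h02 => ?_
  rcases hv _ (hzero _ (h02 ▸ hzero _ hv₀)) with h20 | h22
  · exact apply_two_ne_zero_of_preserves_blockIdx hblock hshift hn h02 h20
  · simpa using σ.injective (h22.trans h02.symm)

/- `g` is monomial because it preserves both partitions. The zero set of `v₁` forces its
permutation to fix `0`, hence to be trivial, and then `v₁` and `v₂` compare the diagonal entries. -/
theorem exists_eq_smul_one_of_preservesFibers (hn : 7 ≤ n) {g : GL (Fin n) F}
    (hg : PreservesFibers blockIdx g.1) (hg' : PreservesFibers shiftedBlockIdx g.1)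
    {α₁ v₁ α₂ v₂ : Fin n → F} (hα₁ : ∀ i, α₁ i = 0 ↔ v₁ i = 0) (hα₂ : ∀ i, α₂ i = 0 ↔ v₂ i = 0)
    (hv₀ : v₁ (Fin.castLE hn 0) = 0)
    (hv₁ : ∀ i, v₁ i = 0 → i = Fin.castLE hn 0 ∨ i = Fin.castLE hn 2)
    (hv₂ : ∀ i, v₂ i = 0 → i = Fin.castLE hn 1 ∨ i = Fin.castLE hn 3)
    (hg₁ : PreservesFibers blockIdx (reflectionMatrix α₁ v₁ * g.1 * reflectionMatrix α₁ v₁))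
    (hg₂ : PreservesFibers blockIdx (reflectionMatrix α₂ v₂ * g.1 * reflectionMatrix α₂ v₂)) :
    ∃ c : F, g.1 = c • (1 : Matrix (Fin n) (Fin n) F) := by
  obtain ⟨σ, hσ⟩ := exists_isMonomial (eq_of_blockIdx_eq_of_shiftedBlockIdx_eq (by omega)) g hg hg'
  have hσ_one := apply_eq_self_of_isMonomial hn hg hg' hσ hα₁ hv₀ hv₁ hg₁
  have hdiag := hσ.eq_diagonal hσ_one
  have hne (i : Fin n) : g.1 i i ≠ 0 := by simpa only [hσ_one] using hσ.apply_self_ne_zero i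
  have hv₁' (i : Fin n) (h0 : i ≠ Fin.castLE hn 0) (h2 : i ≠ Fin.castLE hn 2) : v₁ i ≠ 0 :=
    fun h => (hv₁ i h).elim h0 h2
  have hv₂' (i : Fin n) (h1 : i ≠ Fin.castLE hn 1) (h3 : i ≠ Fin.castLE hn 3) : v₂ i ≠ 0 :=
    fun h => (hv₂ i h).elim h1 h3
  have hpartner (k : Fin 7) (hk : k < 6) :
      ∃ i, i ≠ Fin.castLE hn k ∧ blockIdx i = blockIdx (Fin.castLE hn k) :=
    IsInner.exists_ne (by simp only [IsInner, blockIdx, Fin.val_castLE]; omega)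
  rw [hdiag] at hg₁ hg₂
  have heq₁ (i : Fin n) (hi : v₁ i ≠ 0) : g.1 i i = g.1 (Fin.castLE hn 4) (Fin.castLE hn 4) :=
    eq_of_reflectionMatrix_conj hne hα₁ hg₁ (q := Fin.castLE hn 1) (r := Fin.castLE hn 3)
      (hv₁' _ (by simp) (by simp)) (hv₁' _ (by simp) (by simp)) (hv₁' _ (by simp) (by simp))
      (by simp [blockIdx]) (by simp [blockIdx]) (by simp [blockIdx])
      (hpartner 4 (by decide)) (hpartner 1 (by decide)) hi
  have heq₂ (i : Fin n) (hi : v₂ i ≠ 0) : g.1 i i = g.1 (Fin.castLE hn 4) (Fin.castLE hn 4) :=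
    eq_of_reflectionMatrix_conj hne hα₂ hg₂ (q := Fin.castLE hn 0) (r := Fin.castLE hn 2)
      (hv₂' _ (by simp) (by simp)) (hv₂' _ (by simp) (by simp)) (hv₂' _ (by simp) (by simp))
      (by simp [blockIdx]) (by simp [blockIdx]) (by simp [blockIdx])
      (hpartner 4 (by decide)) (hpartner 0 (by decide)) hi
  refine ⟨g.1 (Fin.castLE hn 4) (Fin.castLE hn 4), ?_⟩
  rw [smul_one_eq_diagonal]
  refine hdiag.trans (congrArg diagonal (funext fun i => ?_))
  by_cases hi : v₁ i = 0
  · refine heq₂ i ?_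
    rcases hv₁ i hi with rfl | rfl <;> exact hv₂' _ (by simp) (by simp)
  · exact heq₁ i hi

end ScalarCriterion

section Diagonalization

variable {F : Type*} [Field F] {n : ℕ}

lemma exists_mul_sq_add_mul_sq_eq_one [Finite F] (h2 : (2 : F) ≠ 0) {s t : F} (hs : s ≠ 0)
    (ht : t ≠ 0) : ∃ α β : F, s * α ^ 2 + t * β ^ 2 = 1 := by
  have := Fintype.ofFinite F
  have hodd : Fintype.card F % 2 = 1 := FiniteField.odd_card_of_char_ne_two fun h =>
    h2 (by simpa [h] using CharP.cast_eq_zero F (ringChar F))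
  open Polynomial in
  obtain ⟨α, β, h⟩ := FiniteField.exists_root_sum_quadratic
    (f := C s * X ^ 2 + C 0 * X + C (-1)) (g := C t * X ^ 2 + C 0 * X + C 0)
    (degree_quadratic hs) (degree_quadratic ht) hodd
  refine ⟨α, β, ?_⟩
  simp only [Polynomial.eval_add, Polynomial.eval_mul, Polynomial.eval_C, Polynomial.eval_pow,
    Polynomial.eval_X] at h
  linear_combination h

lemma diagForm_self_eq_add_sum (b x : Fin n → F) {i j : Fin n} (hij : i ≠ j) :
    diagForm b x x = b i * x i * x i + b j * x j * x j +
      ∑ k ∈ (Finset.univ.erase i).erase j, b k * x k * x k := by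
  have hj : j ∈ Finset.univ.erase i := Finset.mem_erase.mpr ⟨hij.symm, Finset.mem_univ j⟩
  rw [diagForm_apply, ← Finset.add_sum_erase _ _ (Finset.mem_univ i),
    ← Finset.add_sum_erase _ _ hj, add_assoc]

lemma exists_diagForm_map_eq_update [Finite F] (h2 : (2 : F) ≠ 0) {b : Fin n → F} {i j : Fin n}
    (hij : i ≠ j) (hi : b i ≠ 0) (hj : b j ≠ 0) :
    ∃ φ : (Fin n → F) →ₗ[F] (Fin n → F), ∀ x, diagForm b (φ x) (φ x) =
      diagForm (Function.update (Function.update b j (b i * b j)) i 1) x x := by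
  obtain ⟨α, β, h⟩ := exists_mul_sq_add_mul_sq_eq_one h2 hi hj
  let φ : (Fin n → F) →ₗ[F] (Fin n → F) := LinearMap.pi <|
    Function.update (Function.update LinearMap.proj
      j (β • LinearMap.proj i + (b i * α) • LinearMap.proj j))
      i (α • LinearMap.proj i - (b j * β) • LinearMap.proj j)
  have hφi (x : Fin n → F) : φ x i = α * x i - b j * β * x j := by simp [φ]
  have hφj (x : Fin n → F) : φ x j = β * x i + b i * α * x j := by simp [φ, hij.symm]
  have hφ (x : Fin n → F) {k : Fin n} (hki : k ≠ i) (hkj : k ≠ j) : φ x k = x k := by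
    simp [φ, hki, hkj]
  refine ⟨φ, fun x => ?_⟩
  rw [diagForm_self_eq_add_sum _ _ hij, diagForm_self_eq_add_sum _ _ hij, hφi, hφj]
  congr 1
  · simp only [Function.update_self, Function.update_of_ne hij.symm]
    linear_combination (x i * x i + b i * b j * x j * x j) * h
  · refine Finset.sum_congr rfl fun k hk => ?_
    obtain ⟨hkj, hki⟩ : k ≠ j ∧ k ≠ i := by simpa using hk
    rw [hφ x hki hkj, Function.update_of_ne hki, Function.update_of_ne hkj]

lemma exists_map_eq_diagForm (h2 : (2 : F) ≠ 0) {Q : QuadraticForm F (Fin n → F)}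
    (hQ : (QuadraticMap.polarBilin Q).SeparatingLeft) :
    ∃ (φ : (Fin n → F) →ₗ[F] (Fin n → F)) (b : Fin n → F), (∀ i, b i ≠ 0) ∧
      ∀ x, Q (φ x) = diagForm b x x := by
  have : Invertible (2 : F) := invertibleOfNonzero h2
  have hsep : (QuadraticMap.associated (R := F) Q).SeparatingLeft := by
    intro v hv
    refine hQ v fun w => ?_
    rw [← QuadraticMap.two_nsmul_associated F Q, LinearMap.smul_apply, LinearMap.smul_apply, hv w,
      smul_zero]
  obtain ⟨w, ⟨e⟩⟩ := QuadraticForm.equivalent_weightedSumSquares_units_of_nondegenerate' Q hsep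
  have hfin : finrank F (Fin n → F) = n := finrank_fin_fun F
  generalize finrank F (Fin n → F) = m at w e hfin
  subst hfin
  refine ⟨e.symm.toLinearEquiv.toLinearMap, fun i => (w i : F), fun i => (w i).ne_zero,
    fun x => (e.symm.map_app x).trans ?_⟩
  rw [QuadraticMap.weightedSumSquares_apply, diagForm_apply]
  exact Finset.sum_congr rfl fun i _ => by rw [Units.smul_def, smul_eq_mul, mul_assoc]

lemma exists_map_eq_diagForm_of_notMem [Finite F] (h2 : (2 : F) ≠ 0)
    {Q : QuadraticForm F (Fin n → F)} (hQ : (QuadraticMap.polarBilin Q).SeparatingLeft)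
    {l : Fin n} (s : Finset (Fin n)) (hl : l ∉ s) :
    ∃ (φ : (Fin n → F) →ₗ[F] (Fin n → F)) (b : Fin n → F), (∀ i, b i ≠ 0) ∧
      (∀ i ∈ s, b i = 1) ∧ ∀ x, Q (φ x) = diagForm b x x := by
  induction s using Finset.induction_on with
  | empty =>
    obtain ⟨φ, b, hb, hφ⟩ := exists_map_eq_diagForm h2 hQ
    exact ⟨φ, b, hb, by simp, hφ⟩
  | insert i s his ih =>
    rw [Finset.mem_insert, not_or] at hl
    obtain ⟨φ, b, hb, hbs, hφ⟩ := ih hl.2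
    obtain ⟨ψ, hψ⟩ := exists_diagForm_map_eq_update h2 (Ne.symm hl.1) (hb i) (hb l)
    refine ⟨φ ∘ₗ ψ, _, fun k => ?_, fun k hk => ?_, fun x => by
      rw [LinearMap.comp_apply, hφ, hψ]⟩
    · simp only [Function.update_apply]
      split_ifs
      exacts [one_ne_zero, mul_ne_zero (hb i) (hb l), hb k]
    · obtain rfl | hks := Finset.mem_insert.mp hk
      · rw [Function.update_self]
      · rw [Function.update_of_ne (by rintro rfl; exact his hks),
          Function.update_of_ne (by rintro rfl; exact hl.2 hks), hbs k hks]

lemma injective_of_map_eq_diagForm (h2 : (2 : F) ≠ 0) {Q : QuadraticForm F (Fin n → F)}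
    {φ : (Fin n → F) →ₗ[F] (Fin n → F)} {b : Fin n → F} (hb : ∀ i, b i ≠ 0)
    (hφ : ∀ x, Q (φ x) = diagForm b x x) : Function.Injective φ := by
  rw [injective_iff_map_eq_zero]
  intro x hx
  ext i
  have hpolar : diagForm b (x + Pi.single i 1) (x + Pi.single i 1) =
      diagForm b (Pi.single i 1) (Pi.single i 1) := by
    rw [← hφ, ← hφ, map_add, hx, zero_add]
  have hself : diagForm b x x = 0 := by rw [← hφ, hx, QuadraticMap.map_zero]
  rw [map_add, map_add, LinearMap.add_apply, LinearMap.add_apply, hself, diagForm_single_left b x,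
    diagForm_single_right b x] at hpolar
  have hzero : 2 * (b i * x i) = 0 := by linear_combination hpolar
  simpa [h2, hb i] using hzero

lemma exists_vecMul_eq {m : Type*} [Fintype m] [DecidableEq m] (e : (m → F) ≃ₗ[F] (m → F)) :
    ∃ T : GL m F, ∀ x, x ᵥ* T.1 = e x :=
  ⟨⟨toMatrixRight' e.toLinearMap, toMatrixRight' e.symm.toLinearMap,
    by rw [← toMatrixRight'_comp]; simp, by rw [← toMatrixRight'_comp]; simp⟩,
    fun x => congrArg (fun f : (m → F) →ₗ[F] (m → F) => f x)
      (toLinearMapRight'.apply_symm_apply e.toLinearMap)⟩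

theorem exists_vecMul_eq_diagForm [Finite F] (h2 : (2 : F) ≠ 0) {Q : QuadraticForm F (Fin n → F)}
    (hQ : (QuadraticMap.polarBilin Q).SeparatingLeft) (l : Fin n) :
    ∃ (T : GL (Fin n) F) (b : Fin n → F), (∀ i, b i ≠ 0) ∧ (∀ i ≠ l, b i = 1) ∧
      ∀ x, Q (x ᵥ* T.1) = diagForm b x x := by
  obtain ⟨φ, b, hb, hbl, hφ⟩ :=
    exists_map_eq_diagForm_of_notMem h2 hQ (Finset.univ.erase l) (Finset.notMem_erase l _)
  obtain ⟨T, hT⟩ := exists_vecMul_eq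
    (LinearEquiv.ofInjectiveEndo φ (injective_of_map_eq_diagForm h2 hb hφ))
  refine ⟨T, b, hb, fun i hi => hbl i (Finset.mem_erase.mpr ⟨hi, Finset.mem_univ i⟩), fun x => ?_⟩
  rw [hT, ← hφ]
  rfl

end Diagonalization

section Isometry

variable {F : Type*} [Field F] {n : ℕ}

lemma isometryGroup_le_similitudeGroup (B : (Fin n → F) → (Fin n → F) → F) :
    isometryGroup B ≤ similitudeGroup B :=
  fun _ hg => ⟨1, fun u v => by rw [hg u v, Units.val_one, one_mul]⟩

lemma mem_isometryGroup_of_rows {B : LinearMap.BilinForm F (Fin n → F)} {g : GL (Fin n) F}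
    (hg : ∀ i j, B (g.1 i) (g.1 j) = B (Pi.single i 1) (Pi.single j 1)) :
    g ∈ isometryGroup fun x y => B x y := by
  suffices h : B.compl₁₂ (vecMulLinear g.1) (vecMulLinear g.1) = B from
    fun x y => LinearMap.congr_fun₂ h x y
  refine LinearMap.BilinForm.ext_basis (Pi.basisFun F (Fin n)) fun i j => ?_
  simp only [Pi.basisFun_apply, LinearMap.compl₁₂_apply, vecMulLinear_apply, single_one_vecMul]
  exact hg i j

lemma det_eq_one_or_neg_one_of_mem_isometryGroup {b : Fin n → F} (hb : ∀ i, b i ≠ 0)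
    {g : GL (Fin n) F} (hg : g ∈ isometryGroup fun x y => diagForm b x y) :
    g.1.det = 1 ∨ g.1.det = -1 := by
  have hgram : g.1 * diagonal b * g.1ᵀ = diagonal b := by
    ext i j
    have h := hg (Pi.single i 1) (Pi.single j 1)
    beta_reduce at h
    rw [single_one_vecMul, single_one_vecMul, diagForm_single_left, Pi.single_apply] at h
    rw [mul_apply, diagonal_apply]
    simpa [diagForm_apply, row, mul_comm, mul_left_comm] using h
  have hdet := congrArg Matrix.det hgram
  rw [det_mul, det_mul, det_transpose, det_diagonal] at hdet
  have hne : ∏ i, b i ≠ 0 := Finset.prod_ne_zero_iff.mpr fun i _ => hb i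
  exact mul_self_eq_one_iff.mp (mul_right_cancel₀ hne (by linear_combination hdet))

end Isometry

section DiagReflection

variable {F : Type*} [Field F]

lemma vecMul_reflectionMatrix {m : Type*} [Fintype m] [DecidableEq m] (α v x : m → F) :
    x ᵥ* reflectionMatrix α v = x - (x ⬝ᵥ α) • v := by
  rw [reflectionMatrix, vecMul_sub, vecMul_one, vecMul_vecMulVec]

lemma det_reflectionMatrix {m : Type*} [Fintype m] [DecidableEq m] (α v : m → F) :
    (reflectionMatrix α v).det = 1 - v ⬝ᵥ α := by
  rw [reflectionMatrix, vecMulVec_eq Unit, det_one_sub_mul_comm, det_unique]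
  rfl

lemma reflectionMatrix_mul_self {m : Type*} [Fintype m] [DecidableEq m] {α v : m → F}
    (h : v ⬝ᵥ α = 2) : reflectionMatrix α v * reflectionMatrix α v = 1 := by
  refine ext_of_single_vecMul fun i => ?_
  rw [← vecMul_vecMul, vecMul_reflectionMatrix, vecMul_reflectionMatrix, sub_dotProduct,
    smul_dotProduct, h, vecMul_one]
  module

variable {n : ℕ} {b v : Fin n → F}

/-- The coordinates `α` of the functional `x ↦ 2 B(v, x) / B(v, v)`, where `B = diagForm b`, so
that `reflectionMatrix α v` is the reflection along `v`. -/
def coroot (b v : Fin n → F) (i : Fin n) : F := 2 * (b i * v i) / diagForm b v v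

lemma dotProduct_coroot (b v x : Fin n → F) :
    x ⬝ᵥ coroot b v = 2 * diagForm b v x / diagForm b v v := by
  rw [diagForm_apply b v x, Finset.mul_sum, Finset.sum_div]
  exact Finset.sum_congr rfl fun i _ => by rw [coroot]; ring

lemma dotProduct_coroot_self (hv : diagForm b v v ≠ 0) : v ⬝ᵥ coroot b v = 2 := by
  rw [dotProduct_coroot, mul_div_cancel_right₀ _ hv]

lemma coroot_eq_zero_iff (h2 : (2 : F) ≠ 0) (hb : ∀ i, b i ≠ 0) (hv : diagForm b v v ≠ 0)
    (i : Fin n) : coroot b v i = 0 ↔ v i = 0 := by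
  simp [coroot, h2, hb i, hv]

/-- The reflection along `v` with respect to `diagForm b`, acting on row vectors. -/
def diagReflection (hv : diagForm b v v ≠ 0) : GL (Fin n) F where
  val := reflectionMatrix (coroot b v) v
  inv := reflectionMatrix (coroot b v) v
  val_inv := reflectionMatrix_mul_self (dotProduct_coroot_self hv)
  inv_val := reflectionMatrix_mul_self (dotProduct_coroot_self hv)

variable (hv : diagForm b v v ≠ 0)

lemma vecMul_diagReflection (x : Fin n → F) :
    x ᵥ* (diagReflection hv).1 = orthoReflection (diagForm b) v x := by
  rw [diagReflection, vecMul_reflectionMatrix, dotProduct_coroot, orthoReflection_apply]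

lemma diagReflection_conj_val (g : GL (Fin n) F) :
    (diagReflection hv * g * (diagReflection hv)⁻¹).1 =
      reflectionMatrix (coroot b v) v * g.1 * reflectionMatrix (coroot b v) v :=
  rfl

lemma det_diagReflection : (diagReflection hv).1.det = -1 := by
  rw [diagReflection, det_reflectionMatrix, dotProduct_coroot_self hv]
  norm_num

lemma diagReflection_mem_isometryGroup :
    diagReflection hv ∈ isometryGroup fun x y => diagForm b x y := fun x y => by
  simp only [vecMul_diagReflection]
  exact isOrthogonal_orthoReflection (isSymm_diagForm b) hv x y

lemma isRoot_iff_diagReflection_mem {K : Subgroup (GL (Fin n) F)} :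
    IsRoot (diagForm b) K v ↔ diagReflection hv ∈ K := by
  refine ⟨?_, fun h => ⟨hv, _, h, vecMul_diagReflection hv⟩⟩
  rintro ⟨-, g, hg, hgx⟩
  have hgv : diagReflection hv = g := Units.ext <| ext_of_single_vecMul fun i =>
    (vecMul_diagReflection hv _).trans (hgx _).symm
  exact hgv ▸ hg

end DiagReflection

section SignedPerm

variable {m F : Type*} [DecidableEq m] [Field F]

/-- The rows of `G` are the vectors `± e (σ i)`, where `e` is the standard basis. -/
def IsSignedPermMatrix (σ : Equiv.Perm m) (G : Matrix m m F) : Prop :=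
  ∀ i, ∃ ε : F, ε * ε = 1 ∧ G i = Pi.single (σ i) ε

namespace IsSignedPermMatrix

lemma one : IsSignedPermMatrix 1 (1 : Matrix m m F) :=
  fun i => ⟨1, one_mul 1, funext fun j => by simp [one_apply, Pi.single_apply, eq_comm]⟩

variable [Fintype m] {σ τ : Equiv.Perm m} {G H : Matrix m m F}

lemma mul (hG : IsSignedPermMatrix σ G) (hH : IsSignedPermMatrix τ H) :
    IsSignedPermMatrix (τ * σ) (G * H) := fun i => by
  obtain ⟨ε, hε, hi⟩ := hG i
  obtain ⟨δ, hδ, hσi⟩ := hH (σ i)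
  refine ⟨ε * δ, by rw [mul_mul_mul_comm, hε, hδ, one_mul], ?_⟩
  rw [mul_apply_eq_vecMul, hi, single_vecMul, row, hσi, ← Pi.single_smul, smul_eq_mul]
  rfl

lemma pow (hG : IsSignedPermMatrix σ G) (k : ℕ) : IsSignedPermMatrix (σ ^ k) (G ^ k) := by
  induction k with
  | zero => exact one
  | succ k ih =>
    rw [pow_succ', pow_succ]
    exact ih.mul hG

lemma inv {g : GL m F} (hg : IsSignedPermMatrix σ g.1) :
    IsSignedPermMatrix σ⁻¹ (g⁻¹ : GL m F).1 := fun i => by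
  obtain ⟨ε, hε, hi⟩ := hg (σ⁻¹ i)
  have hσ : σ (σ⁻¹ i) = i := σ.apply_symm_apply i
  have hrow : Pi.single (σ⁻¹ i) ε ᵥ* g.1 = Pi.single i 1 := by
    rw [single_vecMul, row, hi, hσ, ← Pi.single_smul, smul_eq_mul, hε]
  refine ⟨ε, hε, ?_⟩
  rw [← vecMul_vecMul_inv g (Pi.single (σ⁻¹ i) ε), hrow, single_one_vecMul]
  rfl

lemma mul_self_eq_one (hG : IsSignedPermMatrix 1 G) : G * G = 1 := by
  funext i
  obtain ⟨ε, hε, hi⟩ := hG i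
  rw [Equiv.Perm.one_apply] at hi
  rw [mul_apply_eq_vecMul, hi, single_vecMul, row, hi, ← Pi.single_smul, smul_eq_mul, hε]
  rw [← vecMul_one (Pi.single i 1), single_one_vecMul]
  rfl

end IsSignedPermMatrix

variable [Fintype m]

variable (F) in
/-- The signed permutation matrices whose underlying permutation belongs to `S`. -/
def signedPerm (S : Subgroup (Equiv.Perm m)) : Subgroup (GL m F) where
  carrier := {g | ∃ σ ∈ S, IsSignedPermMatrix σ g.1}
  one_mem' := ⟨1, one_mem S, .one⟩
  mul_mem' := by
    rintro _ _ ⟨σ, hσ, hg⟩ ⟨τ, hτ, hh⟩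
    exact ⟨τ * σ, mul_mem hτ hσ, hg.mul hh⟩
  inv_mem' := by
    rintro _ ⟨σ, hσ, hg⟩
    exact ⟨σ⁻¹, inv_mem hσ, hg.inv⟩

lemma isPGroup_signedPerm {S : Subgroup (Equiv.Perm m)} (hS : IsPGroup 2 S) :
    IsPGroup 2 (signedPerm F S) := by
  rintro ⟨g, σ, hσ, hg⟩
  obtain ⟨k, hk⟩ := hS ⟨σ, hσ⟩
  replace hk : σ ^ 2 ^ k = 1 := congrArg Subtype.val hk
  have h := (hk ▸ hg.pow (2 ^ k)).mul_self_eq_one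
  refine ⟨k + 1, Subtype.ext (Units.ext ?_)⟩
  rw [← pow_two, ← pow_mul, ← pow_succ] at h
  simpa using h

end SignedPerm

section SignedPermIsometry

variable {F : Type*} [Field F] {n : ℕ}

lemma IsSignedPermMatrix.mem_isometryGroup {b : Fin n → F} {σ : Equiv.Perm (Fin n)}
    (hσ : ∀ i, b (σ i) = b i) {g : GL (Fin n) F} (hg : IsSignedPermMatrix σ g.1) :
    g ∈ isometryGroup fun x y => diagForm b x y := by
  refine mem_isometryGroup_of_rows fun i j => ?_
  have hsmul (k : Fin n) (c : F) : Pi.single k c = c • (Pi.single k 1 : Fin n → F) := by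
    rw [← Pi.single_smul, smul_eq_mul, mul_one]
  obtain ⟨ε, hε, hi⟩ := hg i
  obtain rfl | hij := eq_or_ne i j
  · rw [hi, hsmul, map_smul, map_smul, LinearMap.smul_apply, smul_smul, hε, one_smul,
      diagForm_single_left, diagForm_single_left, hσ, Pi.single_eq_same, Pi.single_eq_same]
  · obtain ⟨δ, -, hj⟩ := hg j
    rw [hi, hj, hsmul, hsmul (σ j)]
    simp [diagForm_single_left, hij]

end SignedPermIsometry

section BlockPerm

/-- The permutations of `Fin n` that preserve every block and move only inner coordinates. -/
def blockPerm (n : ℕ) : Subgroup (Equiv.Perm (Fin n)) where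
  carrier := {σ | ∀ i, blockIdx (σ i) = blockIdx i ∧ (σ i ≠ i → IsInner i)}
  one_mem' i := ⟨rfl, fun h => absurd rfl h⟩
  mul_mem' := by
    intro σ τ hσ hτ i
    refine ⟨(hσ _).1.trans (hτ i).1, fun h => ?_⟩
    by_cases hi : τ i = i
    · exact (hσ i).2 (by rwa [Equiv.Perm.mul_apply, hi] at h)
    · exact (hτ i).2 hi
  inv_mem' := by
    intro σ hσ i
    have h := (hσ (σ⁻¹ i)).1
    rw [Equiv.Perm.coe_inv, Equiv.apply_symm_apply] at h
    exact ⟨h.symm, fun hi => (hσ i).2 fun hne => hi (Equiv.Perm.inv_eq_iff_eq.mpr hne.symm)⟩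

variable {n : ℕ}

lemma isPGroup_blockPerm : IsPGroup 2 (blockPerm n) := by
  rintro ⟨σ, hσ⟩
  refine ⟨1, Subtype.ext (Equiv.ext fun i => ?_)⟩
  change (σ ^ 2 ^ 1) i = i
  rw [pow_one, pow_two, Equiv.Perm.mul_apply]
  by_cases hi : σ i = i
  · rw [hi, hi]
  · exact (eq_or_eq_of_blockIdx_eq hi (hσ i).1 ((hσ _).1.trans (hσ i).1)).resolve_right
      fun h => hi (σ.injective h)

lemma swap_mem_blockPerm {i j : Fin n} (hi : IsInner i) (hj : blockIdx j = blockIdx i) :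
    Equiv.swap i j ∈ blockPerm n := by
  intro k
  rw [Equiv.swap_apply_def]
  split_ifs with hki hkj
  · subst hki
    exact ⟨hj, fun _ => hi⟩
  · subst hkj
    exact ⟨hj.symm, fun _ => hi.of_blockIdx_eq hj⟩
  · exact ⟨rfl, fun h => absurd rfl h⟩

end BlockPerm

section IsometryConstruction

variable {F : Type*} [Field F] {n : ℕ} {b : Fin n → F}

lemma diagReflection_apply {v : Fin n → F} (hv : diagForm b v v ≠ 0) (i : Fin n) :
    (diagReflection hv).1 i = Pi.single i 1 - (2 * (b i * v i) / diagForm b v v) • v := by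
  rw [← diagForm_single_right, ← orthoReflection_apply, ← vecMul_diagReflection,
    single_one_vecMul]
  rfl

lemma diagReflection_single_mem_signedPerm {i : Fin n}
    (hi : diagForm b (Pi.single i 1) (Pi.single i 1) ≠ 0) :
    diagReflection hi ∈ signedPerm F (blockPerm n) := by
  refine ⟨1, one_mem _, fun k => ?_⟩
  rw [diagReflection_apply, Equiv.Perm.one_apply]
  rw [diagForm_single_left, Pi.single_eq_same, mul_one] at hi ⊢
  obtain rfl | hki := eq_or_ne k i
  · refine ⟨-1, by rw [neg_mul_neg, one_mul], ?_⟩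
    rw [Pi.single_eq_same, mul_one, mul_div_cancel_right₀ _ hi, Pi.single_neg]
    module
  · refine ⟨1, one_mul 1, ?_⟩
    rw [Pi.single_eq_of_ne hki, mul_zero, mul_zero, zero_div, zero_smul, sub_zero]

lemma diagForm_single_sub_single {i j : Fin n} (hij : j ≠ i) :
    diagForm b (Pi.single i 1 - Pi.single j 1) (Pi.single i 1 - Pi.single j 1) = b i + b j := by
  simp [diagForm_single_left, hij, hij.symm]

lemma diagReflection_sub_mem_signedPerm (h2 : (2 : F) ≠ 0) {i j : Fin n} (hij : j ≠ i)
    (hi : IsInner i) (hj : blockIdx j = blockIdx i) (hbi : b i = 1) (hbj : b j = 1)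
    (hv : diagForm b (Pi.single i 1 - Pi.single j 1) (Pi.single i 1 - Pi.single j 1) ≠ 0) :
    diagReflection hv ∈ signedPerm F (blockPerm n) := by
  refine ⟨Equiv.swap i j, swap_mem_blockPerm hi hj, fun k => ⟨1, one_mul 1, ?_⟩⟩
  rw [diagReflection_apply, diagForm_single_sub_single hij, hbi, hbj, one_add_one_eq_two,
    mul_div_cancel_left₀ _ h2]
  obtain rfl | hki := eq_or_ne k i
  · simp [hbi, hij.symm]
  obtain rfl | hkj := eq_or_ne k j
  · simp [hbj, hki]
  · simp [hki, hkj, Equiv.swap_apply_of_ne_of_ne]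

lemma signedPerm_blockPerm_le_isometryGroup (hb : ∀ i : Fin n, (i : ℕ) + 1 < n → b i = 1) :
    signedPerm F (blockPerm n) ≤ isometryGroup fun x y => diagForm b x y := by
  rintro g ⟨σ, hσ, hg⟩
  refine hg.mem_isometryGroup fun i => ?_
  by_cases hi : σ i = i
  · rw [hi]
  have hinner := (hσ i).2 hi
  rw [hb _ hinner.lt, hb _ (hinner.of_blockIdx_eq (hσ i).1).lt]

lemma isBlockReflectionGroup_of_signedPerm_le [Finite F] (h2 : (2 : F) ≠ 0)
    (hb₀ : ∀ i, b i ≠ 0) (hb : ∀ i : Fin n, (i : ℕ) + 1 < n → b i = 1)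
    {K : Subgroup (GL (Fin n) F)} [Group.IsSolvable K]
    (hcard : (Nat.card K : F) ≠ 0) (h3 : ¬ 3 ∣ Nat.card K)
    (hle : signedPerm F (blockPerm n) ≤ K) (hK : K ≤ similitudeGroup fun x y => diagForm b x y) :
    IsBlockReflectionGroup b K where
  le_similitudeGroup := hK
  isRoot_single i := by
    have hi : diagForm b (Pi.single i 1) (Pi.single i 1) ≠ 0 := by
      simpa [diagForm_single_left] using hb₀ i
    exact (isRoot_iff_diagReflection_mem hi).mpr (hle (diagReflection_single_mem_signedPerm hi))
  isRoot_sub i j hi hji hj := by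
    have hbi := hb i hi.lt
    have hbj := hb j (hi.of_blockIdx_eq hj).lt
    have hv : diagForm b (Pi.single i 1 - Pi.single j 1) (Pi.single i 1 - Pi.single j 1) ≠ 0 := by
      rwa [diagForm_single_sub_single hji, hbi, hbj, one_add_one_eq_two]
    exact (isRoot_iff_diagReflection_mem hv).mpr
      (hle (diagReflection_sub_mem_signedPerm h2 hji hi hj hbi hbj hv))
  not_linearIndependent v hv h01 h12 hli :=
    h3 (three_dvd_card_of_isRoot (isSymm_diagForm b) h2 hcard hli hv h01 h12)

lemma exists_diagForm_ne_zero (hb₀ : ∀ i, b i ≠ 0) {s t : Fin n} (hst : s ≠ t) :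
    ∃ v, diagForm b v v ≠ 0 ∧ v s = 0 ∧ ∀ i, v i = 0 → i = s ∨ i = t := by
  let w : Fin n → F := fun i => if i = s ∨ i = t then 0 else 1
  have hws : w s = 0 := if_pos (.inl rfl)
  have hwt : w t = 0 := if_pos (.inr rfl)
  have hw (i : Fin n) (hi : w i = 0) : i = s ∨ i = t := by
    by_contra h
    exact one_ne_zero ((if_neg h).symm.trans hi)
  by_cases hzero : diagForm b w w = 0
  · refine ⟨w + Pi.single t 1, ?_, by simp [hws, hst], fun i hi => ?_⟩
    · simpa [diagForm_single_left, diagForm_single_right, hzero, hwt] using hb₀ t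
    · obtain rfl | hit := eq_or_ne i t
      · exact .inr rfl
      · exact hw i (by simpa [hit] using hi)
  · exact ⟨w, hzero, hws, hw⟩

end IsometryConstruction

section Shift

variable {F : Type*} [Field F]

variable {m : Type*} [Fintype m] [DecidableEq m]

variable (F) in
/-- The permutation matrix of `ρ` as an element of `GL`; its rows are the vectors `e (ρ i)`. -/
def permGL (ρ : Equiv.Perm m) : GL m F := (permMatrixHom (R := F)).toHomUnits ρ⁻¹

lemma val_permGL (ρ : Equiv.Perm m) : (permGL F ρ).1 = ρ.permMatrix F := by
  rw [permGL, MonoidHom.coe_toHomUnits, permMatrixHom_apply, inv_inv]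

lemma permGL_conj_apply (ρ : Equiv.Perm m) (g : GL m F) (i j : m) :
    (permGL F ρ * g * (permGL F ρ)⁻¹).1 i j = g.1 (ρ i) (ρ j) := by
  have hinv : permGL F ρ⁻¹ = (permGL F ρ)⁻¹ := map_inv _ _
  rw [← hinv, Units.val_mul, Units.val_mul, val_permGL, val_permGL,
    PEquiv.mul_toMatrix_toPEquiv, PEquiv.toMatrix_toPEquiv_mul]
  rfl

lemma isSignedPermMatrix_permGL (ρ : Equiv.Perm m) : IsSignedPermMatrix ρ (permGL F ρ).1 :=
  fun i => ⟨1, one_mul 1, funext fun j => by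
    rw [val_permGL, Equiv.Perm.permMatrix]
    simp [PEquiv.toMatrix_apply, Pi.single_apply, eq_comm]⟩

lemma exists_perm_shiftedBlockIdx {n : ℕ} (hn : 2 ≤ n) : ∃ ρ : Equiv.Perm (Fin n),
    (∀ i, ρ i ≠ i → (i : ℕ) + 1 < n ∧ (ρ i : ℕ) + 1 < n) ∧
    ∀ i, shiftedBlockIdx (ρ i) = blockIdx i := by
  let l : Fin n := ⟨n - 2, by omega⟩
  suffices h : ∀ i : Fin n, (l.cycleRange i ≠ i → (i : ℕ) + 1 < n ∧ (l.cycleRange i : ℕ) + 1 < n) ∧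
      shiftedBlockIdx (l.cycleRange i) = blockIdx i from
    ⟨l.cycleRange, fun i => (h i).1, fun i => (h i).2⟩
  intro i
  have hl : (l : ℕ) = n - 2 := rfl
  rw [shiftedBlockIdx, blockIdx]
  rcases lt_trichotomy i l with hi | rfl | hi
  · rw [Fin.coe_cycleRange_of_lt hi]
    rw [Fin.lt_def] at hi
    refine ⟨fun _ => by omega, ?_⟩
    rw [if_neg (Nat.succ_ne_zero _), if_pos (by omega), Nat.add_sub_cancel]
  · rw [Fin.coe_cycleRange_of_le le_rfl, if_pos rfl, if_pos rfl, hl]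
    exact ⟨fun _ => by omega, rfl⟩
  · rw [Fin.cycleRange_of_gt hi]
    rw [Fin.lt_def] at hi
    exact ⟨fun h => absurd rfl h, by split_ifs <;> omega⟩

lemma exists_mem_isometryGroup_preservesFibers_shiftedBlockIdx {n : ℕ} (hn : 2 ≤ n)
    {b : Fin n → F} (hb : ∀ i : Fin n, (i : ℕ) + 1 < n → b i = 1) :
    ∃ x ∈ isometryGroup fun x y => diagForm b x y, ∀ g : GL (Fin n) F,
      PreservesFibers blockIdx (x * g * x⁻¹).1 → PreservesFibers shiftedBlockIdx g.1 := by
  obtain ⟨ρ, hρ, hshift⟩ := exists_perm_shiftedBlockIdx hn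
  refine ⟨permGL F ρ, (isSignedPermMatrix_permGL ρ).mem_isometryGroup fun i => ?_, ?_⟩
  · by_cases hi : ρ i = i
    · rw [hi]
    · rw [hb _ (hρ i hi).1, hb _ (hρ i hi).2]
  · intro g hg i i' j j' hii hj hj'
    have h := hg (i := ρ.symm i) (i' := ρ.symm i') (j := ρ.symm j) (j' := ρ.symm j')
    simpa [permGL_conj_apply, ← hshift, hii, hj, hj'] using h

end Shift

section Conjugation

variable {G : Type*} [Group G]

lemma exists_le_conj_smul_of_isPGroup {p : ℕ} [Fact p.Prime] {H L M : Subgroup G}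
    (hL : IsPGroup p L) (hLM : L ≤ M) (hH : ¬ p ∣ H.relIndex M) :
    ∃ u ∈ M, L ≤ MulAut.conj u • H := by
  have hL' : IsPGroup p (L.subgroupOf M) :=
    hL.of_equiv (Subgroup.subgroupOfEquivOfLe hLM).symm
  obtain ⟨a, ha⟩ := hL'.nonempty_fixed_point_of_prime_not_dvd_card (M ⧸ H.subgroupOf M) hH
  obtain ⟨u, rfl⟩ := QuotientGroup.mk_surjective a
  refine ⟨u, u.2, fun g hg => ?_⟩
  have hfix : ((⟨g, hLM hg⟩ * u : M) : M ⧸ H.subgroupOf M) = (u : M ⧸ H.subgroupOf M) :=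
    ha ⟨⟨g, hLM hg⟩, hg⟩
  have hmem := QuotientGroup.eq.mp hfix.symm
  rw [Subgroup.mem_subgroupOf] at hmem
  rw [Subgroup.mem_pointwise_smul_iff_inv_smul_mem, ← map_inv, MulAut.smul_def, MulAut.conj_apply]
  simpa [mul_assoc] using hmem

lemma mem_conjBy {H : Subgroup G} {x g : G} : g ∈ conjBy H x ↔ x * g * x⁻¹ ∈ H := by
  rw [conjBy]
  refine Subgroup.mem_map_equiv.trans ?_
  simp

end Conjugation

section ScalarIntersection

variable {F : Type*} [Field F] {n : ℕ}

/-- Four conjugates of `H`, one of them `H` itself and the others by elements of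
`H * (M ∩ SL n F)`, intersect in scalar matrices. -/
def HasScalarIntersection (M H : Subgroup (GL (Fin n) F)) : Prop :=
  ∃ x y z : GL (Fin n) F,
    x ∈ (H : Set (GL (Fin n) F)) * ((M ⊓ SLsub n F : Subgroup _) : Set (GL (Fin n) F)) ∧
    y ∈ (H : Set (GL (Fin n) F)) * ((M ⊓ SLsub n F : Subgroup _) : Set (GL (Fin n) F)) ∧
    z ∈ (H : Set (GL (Fin n) F)) * ((M ⊓ SLsub n F : Subgroup _) : Set (GL (Fin n) F)) ∧
    ∀ g ∈ H ⊓ conjBy H x ⊓ conjBy H y ⊓ conjBy H z,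
      ∃ c : F, (g : Matrix (Fin n) (Fin n) F) = c • (1 : Matrix (Fin n) (Fin n) F)

instance : (SLsub n F).Normal where
  conj_mem x hx g := by
    change (g * x * g⁻¹).1.det = 1
    rw [Units.val_mul, Units.val_mul, det_mul_right_comm, ← Units.val_mul, mul_inv_cancel,
      Units.val_one, one_mul]
    exact hx

lemma conj_mem_conj_smul_iff {H : Subgroup (GL (Fin n) F)} {T g : GL (Fin n) F} :
    T * g * T⁻¹ ∈ MulAut.conj T • H ↔ g ∈ H :=
  Subgroup.smul_mem_pointwise_smul_iff (a := MulAut.conj T)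

lemma exists_conj_mem_mul_of_mem_mul {M H : Subgroup (GL (Fin n) F)} {T x : GL (Fin n) F}
    (hx : x ∈ ((MulAut.conj T • H : Subgroup _) : Set (GL (Fin n) F)) *
      ((MulAut.conj T • M ⊓ SLsub n F : Subgroup _) : Set (GL (Fin n) F))) :
    ∃ x' ∈ (H : Set (GL (Fin n) F)) * ((M ⊓ SLsub n F : Subgroup _) : Set (GL (Fin n) F)),
      x = T * x' * T⁻¹ := by
  rw [← Subgroup.Normal.conj_smul_eq_self T (SLsub n F), ← Subgroup.smul_inf] at hx
  obtain ⟨_, ⟨h, hh, rfl⟩, _, ⟨s, hs, rfl⟩, rfl⟩ := hx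
  exact ⟨h * s, Set.mul_mem_mul hh hs, (map_mul (MulAut.conj T) h s).symm⟩

lemma HasScalarIntersection.of_conj_smul {M H : Subgroup (GL (Fin n) F)} (T : GL (Fin n) F)
    (h : HasScalarIntersection (MulAut.conj T • M) (MulAut.conj T • H)) :
    HasScalarIntersection M H := by
  obtain ⟨x, y, z, hx, hy, hz, hscalar⟩ := h
  obtain ⟨x', hx', rfl⟩ := exists_conj_mem_mul_of_mem_mul hx
  obtain ⟨y', hy', rfl⟩ := exists_conj_mem_mul_of_mem_mul hy
  obtain ⟨z', hz', rfl⟩ := exists_conj_mem_mul_of_mem_mul hz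
  refine ⟨x', y', z', hx', hy', hz', ?_⟩
  rintro g ⟨⟨⟨hg, hgx⟩, hgy⟩, hgz⟩
  have hconj {w : GL (Fin n) F} (hw : g ∈ conjBy H w) :
      T * g * T⁻¹ ∈ conjBy (MulAut.conj T • H) (T * w * T⁻¹) := by
    rw [mem_conjBy] at hw ⊢
    rw [← conj_mem_conj_smul_iff (T := T)] at hw
    convert hw using 1
    group
  obtain ⟨c, hc⟩ := hscalar _
    ⟨⟨⟨conj_mem_conj_smul_iff.mpr hg, hconj hgx⟩, hconj hgy⟩, hconj hgz⟩
  refine ⟨c, ?_⟩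
  calc g.1 = (T⁻¹ : GL (Fin n) F).1 * (T * g * T⁻¹ : GL (Fin n) F).1 * T.1 := by
        rw [← Units.val_mul, ← Units.val_mul]
        group
    _ = c • 1 := by
        rw [hc, Matrix.mul_smul, Matrix.smul_mul, mul_one, T.inv_mul]

end ScalarIntersection

section QuadraticSimilitudes

variable {F : Type*} [Field F] {n : ℕ}

lemma conj_smul_qSimilitudeGroup (q : (Fin n → F) → F) (T : GL (Fin n) F) :
    MulAut.conj T • qSimilitudeGroup q = qSimilitudeGroup fun x => q (x ᵥ* T.1) := by
  ext g
  rw [Subgroup.mem_pointwise_smul_iff_inv_smul_mem, ← map_inv, MulAut.smul_def, MulAut.conj_apply,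
    inv_inv]
  refine exists_congr fun c => ?_
  simp only [Units.val_mul, ← vecMul_vecMul]
  refine ⟨fun h v => ?_, fun h v => ?_⟩
  · rw [← h, vecMul_vecMul_inv]
  · rw [h, vecMul_inv_vecMul]

lemma qSimilitudeGroup_eq_similitudeGroup (h2 : (2 : F) ≠ 0)
    {B : LinearMap.BilinForm F (Fin n → F)} (hB : B.IsSymm) :
    (qSimilitudeGroup fun x => B x x) = similitudeGroup fun x y => B x y := by
  ext g
  refine exists_congr fun c => ⟨fun h u v => ?_, fun h v => h v v⟩
  beta_reduce at h ⊢
  have huv := h (u + v)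
  simp only [add_vecMul, map_add, LinearMap.add_apply, h u, h v, hB.eq v u,
    hB.eq (v ᵥ* g.1) (u ᵥ* g.1)] at huv
  exact mul_left_cancel₀ h2 (by linear_combination huv)

end QuadraticSimilitudes

section Main

variable {F : Type*} [Field F] {n : ℕ} {b : Fin n → F}

lemma IsBlockReflectionGroup.mem_mul_of_mem_isometryGroup {K : Subgroup (GL (Fin n) F)}
    (hK : IsBlockReflectionGroup b K) {g : GL (Fin n) F}
    (hg : g ∈ isometryGroup fun x y => diagForm b x y) (i : Fin n) :
    g ∈ (K : Set (GL (Fin n) F)) *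
      (((similitudeGroup fun x y => diagForm b x y) ⊓ SLsub n F : Subgroup _) :
        Set (GL (Fin n) F)) := by
  have hsim := isometryGroup_le_similitudeGroup _ hg
  rcases det_eq_one_or_neg_one_of_mem_isometryGroup hK.coeff_ne_zero hg with h | h
  · exact Set.mem_mul.mpr ⟨1, one_mem K, g, ⟨hsim, h⟩, one_mul g⟩
  · have hroot := hK.isRoot_single i
    have hr := (isRoot_iff_diagReflection_mem hroot.1).mp hroot
    have hsim' := Subgroup.mul_mem _ (Subgroup.inv_mem _ (hK.le_similitudeGroup hr)) hsim
    refine Set.mem_mul.mpr ⟨diagReflection hroot.1, hr, (diagReflection hroot.1)⁻¹ * g,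
      ⟨hsim', ?_⟩, mul_inv_cancel_left _ _⟩
    change ((diagReflection hroot.1).1 * g.1).det = 1
    rw [det_mul, det_diagReflection, h, neg_mul_neg, one_mul]

theorem IsBlockReflectionGroup.hasScalarIntersection (h2 : (2 : F) ≠ 0) (hn : 7 ≤ n)
    (hb : ∀ i : Fin n, (i : ℕ) + 1 < n → b i = 1) {K : Subgroup (GL (Fin n) F)}
    (hK : IsBlockReflectionGroup b K) :
    HasScalarIntersection (similitudeGroup fun x y => diagForm b x y) K := by
  obtain ⟨x, hx, hshift⟩ :=
    exists_mem_isometryGroup_preservesFibers_shiftedBlockIdx (show 2 ≤ n by omega) hb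
  obtain ⟨v₁, hv₁, hv₁0, hv₁0'⟩ := exists_diagForm_ne_zero hK.coeff_ne_zero
    (s := Fin.castLE hn 0) (t := Fin.castLE hn 2) (by simp)
  obtain ⟨v₂, hv₂, -, hv₂0⟩ := exists_diagForm_ne_zero hK.coeff_ne_zero
    (s := Fin.castLE hn 1) (t := Fin.castLE hn 3) (by simp)
  have hmem_mul {g : GL (Fin n) F} (hg : g ∈ isometryGroup fun x y => diagForm b x y) :=
    hK.mem_mul_of_mem_isometryGroup hg (Fin.castLE hn 0)
  refine ⟨x, diagReflection hv₁, diagReflection hv₂, hmem_mul hx,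
    hmem_mul (diagReflection_mem_isometryGroup hv₁),
    hmem_mul (diagReflection_mem_isometryGroup hv₂), ?_⟩
  intro g hmem
  obtain ⟨⟨⟨hg, hgx⟩, hg₁⟩, hg₂⟩ := hmem
  have hpres {w : GL (Fin n) F} (hw : g ∈ conjBy K w) : PreservesFibers blockIdx (w * g * w⁻¹).1 :=
    hK.preservesFibers_blockIdx (mem_conjBy.mp hw)
  have hg₁' := hpres hg₁
  have hg₂' := hpres hg₂
  rw [diagReflection_conj_val] at hg₁' hg₂'
  exact exists_eq_smul_one_of_preservesFibers hn (hK.preservesFibers_blockIdx hg)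
    (hshift g (hpres hgx)) (coroot_eq_zero_iff h2 hK.coeff_ne_zero hv₁)
    (coroot_eq_zero_iff h2 hK.coeff_ne_zero hv₂) hv₁0 hv₁0' hv₂0 hg₁' hg₂'

theorem hasScalarIntersection_similitudeGroup_diagForm [Finite F] (h2 : (2 : F) ≠ 0) (hn : 7 ≤ n)
    (hb₀ : ∀ i, b i ≠ 0) (hb : ∀ i : Fin n, (i : ℕ) + 1 < n → b i = 1)
    {H : Subgroup (GL (Fin n) F)} [Group.IsSolvable H] (hcard : (Nat.card H : F) ≠ 0)
    (h3 : ¬ 3 ∣ Nat.card H) (hH : H ≤ similitudeGroup fun x y => diagForm b x y)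
    (hindex : ¬ 2 ∣ H.relIndex (similitudeGroup fun x y => diagForm b x y)) :
    HasScalarIntersection (similitudeGroup fun x y => diagForm b x y) H := by
  have hle := (signedPerm_blockPerm_le_isometryGroup hb).trans (isometryGroup_le_similitudeGroup _)
  obtain ⟨u, hu, hconj⟩ :=
    exists_le_conj_smul_of_isPGroup (isPGroup_signedPerm isPGroup_blockPerm) hle hindex
  have hM := Subgroup.conj_smul_eq_self_of_mem hu
  let e := Subgroup.equivSMul (MulAut.conj u) H
  have : Group.IsSolvable (MulAut.conj u • H : Subgroup _) :=
    Group.isSolvable_of_surjective (f := e.toMonoidHom) e.surjective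
  rw [Nat.card_congr e.toEquiv] at hcard h3
  refine .of_conj_smul u ?_
  rw [hM]
  exact (isBlockReflectionGroup_of_signedPerm_le h2 hb₀ hb hcard h3 hconj
    (hM ▸ Subgroup.pointwise_smul_le_pointwise_smul_iff.mpr hH)).hasScalarIntersection h2 hn hb

theorem stmt8_general [Finite F] (h2 : (2 : F) ≠ 0) (hn : 7 ≤ n) {Q : QuadraticForm F (Fin n → F)}
    (hQ : (QuadraticMap.polarBilin Q).SeparatingLeft) {H : Subgroup (GL (Fin n) F)}
    [Group.IsSolvable H] (hcard : (Nat.card H : F) ≠ 0) (h3 : ¬ 3 ∣ Nat.card H)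
    (hH : H ≤ qSimilitudeGroup Q) (hindex : ¬ 2 ∣ H.relIndex (qSimilitudeGroup Q)) :
    HasScalarIntersection (qSimilitudeGroup Q) H := by
  obtain ⟨T, b, hb₀, hb, hT⟩ := exists_vecMul_eq_diagForm h2 hQ ⟨n - 1, by omega⟩
  have hM : MulAut.conj T • qSimilitudeGroup Q = similitudeGroup fun x y => diagForm b x y := by
    rw [conj_smul_qSimilitudeGroup, ← qSimilitudeGroup_eq_similitudeGroup h2 (isSymm_diagForm b)]
    simp only [hT]
  let e := Subgroup.equivSMul (MulAut.conj T) H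
  have : Group.IsSolvable (MulAut.conj T • H : Subgroup _) :=
    Group.isSolvable_of_surjective (f := e.toMonoidHom) e.surjective
  rw [Nat.card_congr e.toEquiv] at hcard h3
  refine .of_conj_smul T ?_
  rw [hM]
  refine hasScalarIntersection_similitudeGroup_diagForm h2 hn hb₀
    (fun i hi => hb i fun h => ?_) hcard h3 ?_ ?_
  · subst h
    simp only at hi
    omega
  · exact hM ▸ Subgroup.pointwise_smul_le_pointwise_smul_iff.mpr hH
  · rwa [← hM, Subgroup.relIndex_pointwise_smul]

end Main

theorem stmt8 (p f q n : ℕ) (hp : p.Prime) (hpodd : p ≠ 2) (hf : 1 ≤ f) (hq : q = p ^ f)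
    (F : Type) [Field F] [Fintype F] (hcard : Fintype.card F = q)
    (hn : 7 ≤ n)
    (Q : QuadraticForm F (Fin n → F))
    (hnd : ∀ v : Fin n → F, (∀ w : Fin n → F, QuadraticMap.polar (⇑Q) v w = 0) → v = 0)
    (hnonsolv : ¬ IsSolvable ↥(qSimilitudeGroup (⇑Q : (Fin n → F) → F)))
    (π : Set ℕ) (hπ : ∀ r ∈ π, r.Prime) (h2pi : 2 ∈ π) (h3pi : 3 ∉ π) (hppi : p ∉ π)
    (H : Subgroup (GL (Fin n) F))
    (hH : IsHallSubgroupIn π (qSimilitudeGroup (⇑Q : (Fin n → F) → F)) H)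
    (hsolv : IsSolvable ↥H)
    :
    ∃ x y z : GL (Fin n) F,
      x ∈ (H : Set (GL (Fin n) F)) * ((qSimilitudeGroup (⇑Q : (Fin n → F) → F) ⊓ SLsub n F : Subgroup (GL (Fin n) F)) : Set (GL (Fin n) F)) ∧
      y ∈ (H : Set (GL (Fin n) F)) * ((qSimilitudeGroup (⇑Q : (Fin n → F) → F) ⊓ SLsub n F : Subgroup (GL (Fin n) F)) : Set (GL (Fin n) F)) ∧
      z ∈ (H : Set (GL (Fin n) F)) * ((qSimilitudeGroup (⇑Q : (Fin n → F) → F) ⊓ SLsub n F : Subgroup (GL (Fin n) F)) : Set (GL (Fin n) F)) ∧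
    ∀ g ∈ H ⊓ conjBy H x ⊓ conjBy H y ⊓ conjBy H z,
      ∃ c : F, (g : Matrix (Fin n) (Fin n) F) = c • (1 : Matrix (Fin n) (Fin n) F) := by
  obtain ⟨hle, hprime, hindex⟩ := hH
  have : Group.IsSolvable H := hsolv
  have : Fact p.Prime := ⟨hp⟩
  have : CharP F p := charP_of_card_eq_prime_pow (hcard.trans hq)
  refine stmt8_general (fun h => hpodd ?_) hn hnd (fun h => hppi (hprime p hp ?_))
    (fun h => h3pi (hprime 3 Nat.prime_three h)) hle (hindex 2 h2pi)
  · exact (Nat.prime_dvd_prime_iff_eq hp Nat.prime_two).mp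
      ((CharP.cast_eq_zero_iff F p 2).mp (mod_cast h))
  · exact (CharP.cast_eq_zero_iff F p _).mp h
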